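/- Let A be a basic indecomposable artin algebra and Γ a cycle-finite component of the cyclic quiver _cΓ_A. Consider a decomposition A = P_Γ ⊕ Q_Γ of A in mod A such that the simple summands of P_Γ/rad P_Γ are exactly the simple composition factors of the indecomposable modules in Γ. Then the algebras supp(Γ) = A/t_A(Γ) and End_A(P_Γ) are isomorphic. -/

import Mathlib

/-!
Common framework: finite length modules over a ring, the radical of the module
category, cycles of indecomposable modules, Auslander-Reiten quivers,
translation quivers notions, and classes of artin algebras.
Right `A`-modules are formalized as left `Aᵐᵒᵖ`-modules.
-/

universe u

/-- A bundled object of `mod R`: a finite length `R`-module. -/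
structure ModA (R : Type u) [Ring R] : Type (u + 1) where
  M : Type u
  [acg : AddCommGroup M]
  [mod : Module R M]
  finLen : IsFiniteLength R M

attribute [instance] ModA.acg ModA.mod

/-- A bundled (not necessarily finite length) `R`-module. -/
structure RawMod (R : Type u) [Ring R] : Type (u + 1) where
  M : Type u
  [acg : AddCommGroup M]
  [mod : Module R M]

attribute [instance] RawMod.acg RawMod.mod

/-- A module is indecomposable iff it is nonzero and its endomorphism ring has no
nontrivial idempotents. -/
def IsIndecMod (R : Type u) [Ring R] (M : Type u) [AddCommGroup M] [Module R M] : Prop :=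
  Nontrivial M ∧ ∀ f : Module.End R M, f * f = f → f = 0 ∨ f = 1

namespace ModA

variable {R : Type u} [Ring R]

/-- Indecomposability of an object of `mod R`. -/
def IsIndec (X : ModA R) : Prop := IsIndecMod R X.M

/-- Isomorphism of objects of `mod R`. -/
def Iso (X Y : ModA R) : Prop := Nonempty (X.M ≃ₗ[R] Y.M)

end ModA

/-- Membership in the radical `rad(X, Y)` of the category `mod R`: a map `f : X → Y`
belongs to the radical iff for every indecomposable `Z` and all `g : Z → X`, `h : Y → Z`
the composite `h ∘ f ∘ g` is not an isomorphism. -/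
def InRad {R : Type u} [Ring R] {X Y : ModA R} (f : X.M →ₗ[R] Y.M) : Prop :=
  ∀ Z : ModA R, Z.IsIndec → ∀ (g : Z.M →ₗ[R] X.M) (h : Y.M →ₗ[R] Z.M),
    ¬Function.Bijective (h.comp (f.comp g))

/-- The powers `rad^n` of the radical of `mod R`. -/
def radPow (R : Type u) [Ring R] : ℕ → ∀ X Y : ModA R, AddSubgroup (X.M →ₗ[R] Y.M)
  | 0, _, _ => ⊤
  | n + 1, X, Y => AddSubgroup.closure
      {f | ∃ (Z : ModA R) (g : X.M →ₗ[R] Z.M) (h : Z.M →ₗ[R] Y.M),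
        InRad g ∧ h ∈ radPow R n Z Y ∧ f = h.comp g}

/-- Membership in the infinite radical `rad^∞ = ⋂ₙ radⁿ` of `mod R`. -/
def InRadInf {R : Type u} [Ring R] {X Y : ModA R} (f : X.M →ₗ[R] Y.M) : Prop :=
  ∀ n : ℕ, f ∈ radPow R n X Y

/-- A cycle in `ind R`: a sequence of nonzero nonisomorphisms
`M₀ → M₁ → ⋯ → M_{r-1} → M_r = M₀` between indecomposable modules. -/
structure ModCycle (R : Type u) [Ring R] : Type (u + 1) where
  len : ℕ
  len_pos : 0 < len
  obj : Fin (len + 1) → ModA R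
  obj_indec : ∀ i, (obj i).IsIndec
  closed : obj (Fin.last len) = obj 0
  hom : ∀ i : Fin len, (obj i.castSucc).M →ₗ[R] (obj i.succ).M
  hom_ne_zero : ∀ i, hom i ≠ 0
  hom_not_iso : ∀ i, ¬Function.Bijective (hom i)

/-- A cycle is finite if none of its homomorphisms lies in the infinite radical. -/
def ModCycle.IsFiniteCycle {R : Type u} [Ring R] (c : ModCycle R) : Prop :=
  ∀ i, ¬InRadInf (c.hom i)

/-- The cycle passes through the module `M`. -/
def ModCycle.Passes {R : Type u} [Ring R] (c : ModCycle R) (M : ModA R) : Prop :=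
  ∃ i, (c.obj i).Iso M

/-- A module is cycle-finite if it lies on a cycle and every cycle through it is finite. -/
def IsCycleFiniteModule {R : Type u} [Ring R] (M : ModA R) : Prop :=
  (∃ c : ModCycle R, c.Passes M) ∧ ∀ c : ModCycle R, c.Passes M → c.IsFiniteCycle

/-- A module is directing if it lies on no cycle. -/
def IsDirectingModule {R : Type u} [Ring R] (M : ModA R) : Prop :=
  ¬∃ c : ModCycle R, c.Passes M

section Irreducible

variable {R : Type u} [Ring R]

/-- `f` is a split monomorphism (a section). -/
def SplitMonoMap {X Y : ModA R} (f : X.M →ₗ[R] Y.M) : Prop :=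
  ∃ r : Y.M →ₗ[R] X.M, r.comp f = LinearMap.id

/-- `f` is a split epimorphism (a retraction). -/
def SplitEpiMap {X Y : ModA R} (f : X.M →ₗ[R] Y.M) : Prop :=
  ∃ s : Y.M →ₗ[R] X.M, f.comp s = LinearMap.id

/-- `f` is an irreducible homomorphism. -/
def IsIrred {X Y : ModA R} (f : X.M →ₗ[R] Y.M) : Prop :=
  ¬SplitMonoMap f ∧ ¬SplitEpiMap f ∧
    ∀ (Z : ModA R) (g : X.M →ₗ[R] Z.M) (h : Z.M →ₗ[R] Y.M), h.comp g = f →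
      SplitMonoMap g ∨ SplitEpiMap h

end Irreducible

/-- An almost split (Auslander-Reiten) sequence `0 → l → m → r → 0` in `mod R`. -/
structure AlmostSplitSeq (R : Type u) [Ring R] : Type (u + 1) where
  l : ModA R
  m : ModA R
  r : ModA R
  f : l.M →ₗ[R] m.M
  g : m.M →ₗ[R] r.M
  inj : Function.Injective f
  surj : Function.Surjective g
  exact : LinearMap.range f = LinearMap.ker g
  not_split : ¬SplitEpiMap g
  l_indec : l.IsIndec
  r_indec : r.IsIndec
  right_almost : ∀ (Z : ModA R) (h : Z.M →ₗ[R] r.M), ¬SplitEpiMap h →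
      ∃ h' : Z.M →ₗ[R] m.M, g.comp h' = h
  left_almost : ∀ (Z : ModA R) (h : l.M →ₗ[R] Z.M), ¬SplitMonoMap h →
      ∃ h' : m.M →ₗ[R] Z.M, h'.comp f = h

/-- `N ≅ τ M` for the Auslander-Reiten translation `τ = DTr`. -/
def IsTauOf {R : Type u} [Ring R] (N M : ModA R) : Prop :=
  ∃ s : AlmostSplitSeq R, s.l.Iso N ∧ s.r.Iso M

/-- The indecomposable objects of `mod R`. -/
def IndecModA (R : Type u) [Ring R] := {X : ModA R // X.IsIndec}

/-- Isomorphism is an equivalence relation on indecomposable modules. -/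
def isoSetoid (R : Type u) [Ring R] : Setoid (IndecModA R) where
  r X Y := X.1.Iso Y.1
  iseqv :=
    { refl := fun X => ⟨LinearEquiv.refl R X.1.M⟩
      symm := fun h => h.elim fun e => ⟨e.symm⟩
      trans := fun h h' => h.elim fun e => h'.elim fun e' => ⟨e.trans e'⟩ }

/-- The vertices of the Auslander-Reiten quiver `Γ_R`: isomorphism classes of
indecomposable modules in `mod R`. -/
def ARVertex (R : Type u) [Ring R] := Quotient (isoSetoid R)

/-- The vertex of `Γ_R` given by an indecomposable module. -/
def ARVertex.mk {R : Type u} [Ring R] (X : IndecModA R) : ARVertex R :=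
  Quotient.mk (isoSetoid R) X

section ARQuiver

variable {R : Type u} [Ring R]

/-- The arrows of the Auslander-Reiten quiver: `x → y` iff there is an irreducible
homomorphism between representatives. -/
def ARArrow (x y : ARVertex R) : Prop :=
  ∃ (X Y : IndecModA R) (f : X.1.M →ₗ[R] Y.1.M),
    IsIrred f ∧ ARVertex.mk X = x ∧ ARVertex.mk Y = y

/-- `TauRel x y` iff `x = τ y` in the Auslander-Reiten quiver. -/
def TauRel (x y : ARVertex R) : Prop :=
  ∃ X Y : IndecModA R, ARVertex.mk X = x ∧ ARVertex.mk Y = y ∧ IsTauOf X.1 Y.1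

/-- A vertex given by an (indecomposable) projective module. -/
def IsProjVertex (x : ARVertex R) : Prop :=
  ∃ X : IndecModA R, ARVertex.mk X = x ∧ Module.Projective R X.1.M

/-- A vertex given by an (indecomposable) injective module. -/
def IsInjVertex (x : ARVertex R) : Prop :=
  ∃ X : IndecModA R, ARVertex.mk X = x ∧ Module.Injective R X.1.M

/-- The vertex lies on an oriented cycle of `Γ_R`. -/
def OnARCycle (x : ARVertex R) : Prop := Relation.TransGen ARArrow x x

/-- An edge (arrow in either direction) of the underlying graph of `Γ_R`. -/
def ARStep (x y : ARVertex R) : Prop := ARArrow x y ∨ ARArrow y x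

/-- `D` is a connected component of the full subquiver of `Γ_R` on the vertex set `S`. -/
def IsComponentOf (S D : Set (ARVertex R)) : Prop :=
  D ⊆ S ∧ D.Nonempty ∧
    (∀ x ∈ D, ∀ y ∈ S, ARStep x y → y ∈ D) ∧
    ∀ x ∈ D, ∀ y ∈ D, Relation.ReflTransGen (fun a b => a ∈ S ∧ b ∈ S ∧ ARStep a b) x y

/-- `C` is a connected component of `Γ_R`. -/
def IsARComponent (C : Set (ARVertex R)) : Prop := IsComponentOf Set.univ C

/-- The vertex lies on an oriented cycle all of whose vertices belong to `S`. -/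
def OnCycleIn (S : Set (ARVertex R)) (x : ARVertex R) : Prop :=
  Relation.TransGen (fun a b => a ∈ S ∧ b ∈ S ∧ ARArrow a b) x x

/-- `Γ` is a connected component of the cyclic quiver `_cΓ_R` (a cyclic component). -/
def IsCyclicComponent (Γ : Set (ARVertex R)) : Prop :=
  IsComponentOf {x | OnARCycle x} Γ

/-- A vertex represented by a cycle-finite module. -/
def IsCycleFiniteVertex (x : ARVertex R) : Prop :=
  ∃ X : IndecModA R, ARVertex.mk X = x ∧ IsCycleFiniteModule X.1

/-- A vertex represented by a directing module. -/
def IsDirectingVertex (x : ARVertex R) : Prop :=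
  ∃ X : IndecModA R, ARVertex.mk X = x ∧ IsDirectingModule X.1

/-- A cycle-finite cyclic component: a cyclic component containing a cycle-finite module. -/
def IsCycleFiniteCyclicComponent (Γ : Set (ARVertex R)) : Prop :=
  IsCyclicComponent Γ ∧ ∃ x ∈ Γ, IsCycleFiniteVertex x

/-- A full translation subquiver is cyclic if each of its vertices lies on an oriented
cycle inside it. -/
def IsCyclicSub (S : Set (ARVertex R)) : Prop := ∀ x ∈ S, OnCycleIn S x

/-- A full translation subquiver is coherent: every projective vertex is the start of an
infinite sectional path inside it, and every injective vertex is the end of an infinite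
sectional path inside it. -/
def IsCoherentSub (S : Set (ARVertex R)) : Prop :=
  (∀ x ∈ S, IsProjVertex x → ∃ c : ℕ → ARVertex R, c 0 = x ∧ (∀ n, c n ∈ S) ∧
      (∀ n, ARArrow (c n) (c (n + 1))) ∧ ∀ n, ¬TauRel (c n) (c (n + 2))) ∧
  (∀ x ∈ S, IsInjVertex x → ∃ c : ℕ → ARVertex R, c 0 = x ∧ (∀ n, c n ∈ S) ∧
      (∀ n, ARArrow (c (n + 1)) (c n)) ∧ ∀ n, ¬TauRel (c (n + 2)) (c n))

/-- `S` is a convex subquiver of (the full subquiver on) `C`: every path in `C` with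
source and target in `S` has all its vertices in `S`. -/
def ConvexIn (C S : Set (ARVertex R)) : Prop :=
  ∀ (n : ℕ) (c : ℕ → ARVertex R), (∀ k ≤ n, c k ∈ C) →
    (∀ k < n, ARArrow (c k) (c (k + 1))) → c 0 ∈ S → c n ∈ S → ∀ k ≤ n, c k ∈ S

/-- `S` is the core of the almost acyclic component `C`: the finite convex subquiver of
`C` containing all vertices lying on oriented cycles in `C`. -/
def IsCoreOf (C S : Set (ARVertex R)) : Prop :=
  S ⊆ C ∧ S.Finite ∧ ConvexIn C S ∧ ∀ x ∈ C, OnCycleIn C x → x ∈ S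

/-- A component is almost acyclic if all but finitely many of its vertices do not lie on
oriented cycles. -/
def IsAlmostAcyclicComp (C : Set (ARVertex R)) : Prop := {x ∈ C | OnCycleIn C x}.Finite

/-- A component is almost cyclic if its cyclic part is cofinite. -/
def IsAlmostCyclicComp (C : Set (ARVertex R)) : Prop := {x ∈ C | ¬OnCycleIn C x}.Finite

/-- Two vertices lie in the same `τ`-orbit. -/
def TauConn (x y : ARVertex R) : Prop :=
  Relation.ReflTransGen (fun a b => TauRel a b ∨ TauRel b a) x y

/-- The left stable part of `C`: remove the `τ`-orbits of projective vertices. -/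
def leftStable (C : Set (ARVertex R)) : Set (ARVertex R) :=
  {x | x ∈ C ∧ ¬∃ y, TauConn x y ∧ IsProjVertex y}

/-- The right stable part of `C`: remove the `τ`-orbits of injective vertices. -/
def rightStable (C : Set (ARVertex R)) : Set (ARVertex R) :=
  {x | x ∈ C ∧ ¬∃ y, TauConn x y ∧ IsInjVertex y}

/-- The stable part of `C`. -/
def stablePart (C : Set (ARVertex R)) : Set (ARVertex R) := leftStable C ∩ rightStable C

end ARQuiver

/-- The arrows of the translation quiver `ℤA∞/(τ^r)`, with vertices indexed by the
`τ`-orbit coordinate in `ZMod r` and the quasi-length (minus one) in `ℕ`. -/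
def TubeArrow {r : ℕ} : ZMod r × ℕ → ZMod r × ℕ → Prop := fun u v =>
  (v.1 = u.1 ∧ v.2 = u.2 + 1) ∨ (v.1 = u.1 + 1 ∧ u.2 = v.2 + 1)

section Tube

variable {R : Type u} [Ring R]

/-- `T` is a stable tube of rank `r`, parametrized by `φ : ℤA∞/(τ^r) → Γ_R`. -/
def IsStableTubeVia (T : Set (ARVertex R)) (r : ℕ) (φ : ZMod r × ℕ → ARVertex R) : Prop :=
  0 < r ∧ Function.Injective φ ∧ Set.range φ = T ∧
    (∀ u v, TubeArrow u v → ARArrow (φ u) (φ v)) ∧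
    (∀ u v, ARArrow (φ u) (φ v) → TubeArrow u v) ∧
    ∀ (i : ZMod r) (n : ℕ), TauRel (φ (i - 1, n)) (φ (i, n))

/-- `T` is a stable tube. -/
def IsStableTube (T : Set (ARVertex R)) : Prop := ∃ r φ, IsStableTubeVia T r φ

end Tube

section Separating

variable {R : Type u} [Ring R]

/-- A family of vertices is generalized standard if `rad^∞` vanishes between its modules. -/
def GeneralizedStandardSet (U : Set (ARVertex R)) : Prop :=
  ∀ X Y : IndecModA R, ARVertex.mk X ∈ U → ARVertex.mk Y ∈ U →
    ∀ f : X.1.M →ₗ[R] Y.1.M, InRadInf f → f = 0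

/-- `S` is (isomorphic to) a composition factor (a subquotient) of `M`. -/
def IsCompFactorMod (R : Type u) [Ring R] (S : Type u) [AddCommGroup S] [Module R S]
    (M : Type u) [AddCommGroup M] [Module R M] : Prop :=
  ∃ N' N : Submodule R M, N' ≤ N ∧
    Nonempty ((↥N ⧸ N'.comap N.subtype) ≃ₗ[R] S)

/-- A family of vertices is sincere if every simple module is a composition factor of one
of its modules. -/
def SincereSet (U : Set (ARVertex R)) : Prop :=
  ∀ (S : Type u) [AddCommGroup S] [Module R S], IsSimpleModule R S →
    ∃ x ∈ U, ∃ X : IndecModA R, ARVertex.mk X = x ∧ IsCompFactorMod R S X.1.M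

/-- All homomorphisms from modules with vertex in `U` to modules with vertex in `V` vanish. -/
def HomVanish (U V : Set (ARVertex R)) : Prop :=
  ∀ X Y : IndecModA R, ARVertex.mk X ∈ U → ARVertex.mk Y ∈ V →
    ∀ f : X.1.M →ₗ[R] Y.1.M, f = 0

/-- Every homomorphism from a module in `U` to a module in `V` factors through the
additive closure of the modules in `W`. -/
def FactorsThrough (U W V : Set (ARVertex R)) : Prop :=
  ∀ X Y : IndecModA R, ARVertex.mk X ∈ U → ARVertex.mk Y ∈ V →
    ∀ f : X.1.M →ₗ[R] Y.1.M, ∃ (k : ℕ) (Z : Fin k → IndecModA R)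
      (g : ∀ i, X.1.M →ₗ[R] (Z i).1.M) (h : ∀ i, (Z i).1.M →ₗ[R] Y.1.M),
      (∀ i, ARVertex.mk (Z i) ∈ W) ∧ f = ∑ i, (h i).comp (g i)

/-- `cs` is a separating family of components of `Γ_R`. -/
def IsSeparatingFamily (cs : Set (Set (ARVertex R))) : Prop :=
  ∃ ps qs : Set (Set (ARVertex R)),
    (∀ C ∈ ps, IsARComponent C) ∧ (∀ C ∈ cs, IsARComponent C) ∧ (∀ C ∈ qs, IsARComponent C) ∧
    (∀ C, IsARComponent C → C ∈ ps ∨ C ∈ cs ∨ C ∈ qs) ∧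
    (∀ C ∈ ps, C ∉ cs ∧ C ∉ qs) ∧ (∀ C ∈ cs, C ∉ qs) ∧
    SincereSet (⋃₀ cs) ∧ GeneralizedStandardSet (⋃₀ cs) ∧
    HomVanish (⋃₀ qs) (⋃₀ ps) ∧ HomVanish (⋃₀ qs) (⋃₀ cs) ∧ HomVanish (⋃₀ cs) (⋃₀ ps) ∧
    FactorsThrough (⋃₀ ps) (⋃₀ cs) (⋃₀ qs)

end Separating

/-! ### Classes of algebras via their Auslander-Reiten quivers.
For a ring `B`, the category `mod B` of finitely generated right `B`-modules is
realized as the category of finite length left `Bᵐᵒᵖ`-modules. -/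

/-- An algebra is of finite representation type if it has only finitely many isomorphism
classes of indecomposable finitely generated (right) modules. -/
def IsFiniteRepTypeAlg (B : Type u) [Ring B] : Prop :=
  (Set.univ : Set (ARVertex Bᵐᵒᵖ)).Finite

/-- An algebra is cycle-finite if all cycles in `ind B` are finite. -/
def IsCycleFiniteAlg (B : Type u) [Ring B] : Prop :=
  ∀ c : ModCycle Bᵐᵒᵖ, c.IsFiniteCycle

/-- A generalized multicoil algebra: an algebra whose Auslander-Reiten quiver admits a
separating family of almost cyclic coherent components. -/
def IsGeneralizedMulticoilAlgebra (B : Type u) [Ring B] : Prop :=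
  ∃ cs : Set (Set (ARVertex Bᵐᵒᵖ)),
    (∀ C ∈ cs, IsARComponent C ∧ IsAlmostCyclicComp C ∧ IsCoherentSub C) ∧
    IsSeparatingFamily cs

/-- A generalized double tilted algebra: an algebra whose Auslander-Reiten quiver admits
a separating almost acyclic component (a connecting component). -/
def IsGeneralizedDoubleTiltedAlgebra (B : Type u) [Ring B] : Prop :=
  ∃ C : Set (ARVertex Bᵐᵒᵖ),
    IsARComponent C ∧ IsAlmostAcyclicComp C ∧ IsSeparatingFamily {C}

/-- A concealed canonical algebra: an algebra whose Auslander-Reiten quiver admits a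
separating family of stable tubes. -/
def IsConcealedCanonicalAlgebra (B : Type u) [Ring B] : Prop :=
  ∃ ts : Set (Set (ARVertex Bᵐᵒᵖ)), (∀ T ∈ ts, IsStableTube T) ∧ IsSeparatingFamily ts

/-- A generic module: an indecomposable module of infinite length with finite endolength. -/
def IsGenericModule (R : Type u) [Ring R] (N : RawMod R) : Prop :=
  IsIndecMod R N.M ∧ ¬IsFiniteLength R N.M ∧ IsFiniteLength (Module.End R N.M) N.M

/-- The endolength of a module: its length over its endomorphism ring. -/
noncomputable def endolength (R : Type u) [Ring R] (N : RawMod R) : WithBot ℕ∞ :=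
  Order.krullDim (Submodule (Module.End R N.M) N.M)

/-- Generic tameness in the sense of Crawley-Boevey: for each `d` there are only finitely
many isomorphism classes of generic (right) modules of endolength `d`. -/
def IsGenericallyTameAlg (B : Type u) [Ring B] : Prop :=
  ∀ d : ℕ, ∃ (k : ℕ) (T : Fin k → RawMod Bᵐᵒᵖ),
    ∀ N : RawMod Bᵐᵒᵖ, IsGenericModule Bᵐᵒᵖ N → endolength Bᵐᵒᵖ N = (d : ℕ∞) →
      ∃ i, Nonempty (N.M ≃ₗ[Bᵐᵒᵖ] (T i).M)

/-- A tame generalized multicoil algebra. -/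
def IsTameGeneralizedMulticoilAlgebra (B : Type u) [Ring B] : Prop :=
  IsGeneralizedMulticoilAlgebra B ∧ IsGenericallyTameAlg B

/-- A tame generalized double tilted algebra. -/
def IsTameGeneralizedDoubleTiltedAlgebra (B : Type u) [Ring B] : Prop :=
  IsGeneralizedDoubleTiltedAlgebra B ∧ IsGenericallyTameAlg B

/-! ### The quiver of an algebra, convex idempotents, basic and connected algebras -/

section AlgebraSide

variable (A : Type u) [Ring A]

/-- The Jacobson radical of `A` (as a left ideal; it is in fact two-sided). -/
def jacobsonRad : Ideal A := (⊥ : Ideal A).jacobson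

/-- The square of the Jacobson radical of `A`. -/
def jacobsonRadSq : Ideal A :=
  Ideal.span {x | ∃ a ∈ jacobsonRad A, ∃ b ∈ jacobsonRad A, x = a * b}

/-- A primitive idempotent of `A`. -/
def IsPrimitiveIdempotent (e : A) : Prop :=
  IsIdempotentElem e ∧ e ≠ 0 ∧
    ∀ f g : A, IsIdempotentElem f → IsIdempotentElem g → f * g = 0 → g * f = 0 →
      e = f + g → f = 0 ∨ g = 0

/-- A complete family of pairwise orthogonal primitive idempotents of `A`; its indices
are the vertices of the quiver `Q_A` of `A`. -/
structure CompleteIdemFamily (A : Type u) [Ring A] where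
  n : ℕ
  e : Fin n → A
  prim : ∀ i, IsPrimitiveIdempotent A (e i)
  orth : ∀ i j, i ≠ j → e i * e j = 0
  total : ∑ i, e i = 1

/-- There is an arrow `i → j` in the quiver `Q_A` iff `e_i (rad A) e_j ⊄ (rad A)²`. -/
def QAarrow (E : CompleteIdemFamily A) (i j : Fin E.n) : Prop :=
  ∃ y ∈ jacobsonRad A, E.e i * y * E.e j ∉ jacobsonRadSq A

/-- A set of vertices of `Q_A` is convex if every path of `Q_A` with source and target in
it has all its vertices in it. -/
def ConvexVertexSet (E : CompleteIdemFamily A) (S : Set (Fin E.n)) : Prop :=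
  ∀ (n : ℕ) (c : ℕ → Fin E.n), (∀ k < n, QAarrow A E (c k) (c (k + 1))) →
    c 0 ∈ S → c n ∈ S → ∀ k ≤ n, c k ∈ S

/-- A convex idempotent of `A`: a sum of pairwise orthogonal primitive idempotents
corresponding to the vertices of a convex subquiver of `Q_A`. -/
def IsConvexIdempotent (e : A) : Prop :=
  ∃ (E : CompleteIdemFamily A) (S : Finset (Fin E.n)),
    ConvexVertexSet A E ↑S ∧ e = ∑ i ∈ S, E.e i

/-- The corner `eAe` of `A` at an idempotent `e`, as a nonunital subring (it is a unital
ring with unit `e`). -/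
def cornerRing (e : A) : NonUnitalSubring A where
  carrier := {x | e * x = x ∧ x * e = x}
  zero_mem' := by simp
  add_mem' := by
    rintro a b ⟨ha1, ha2⟩ ⟨hb1, hb2⟩
    constructor
    · rw [mul_add, ha1, hb1]
    · rw [add_mul, ha2, hb2]
  neg_mem' := by
    rintro a ⟨ha1, ha2⟩
    constructor
    · rw [mul_neg, ha1]
    · rw [neg_mul, ha2]
  mul_mem' := by
    rintro a b ⟨ha1, ha2⟩ ⟨hb1, hb2⟩
    constructor
    · rw [← mul_assoc, ha1]
    · rw [mul_assoc, hb2]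

/-- An (indecomposable =) connected algebra: no nontrivial central idempotents. -/
def IsConnectedAlgebra : Prop :=
  Nontrivial A ∧ ∀ e : A, IsIdempotentElem e → e ∈ Set.center A → e = 0 ∨ e = 1

/-- A basic algebra: distinct orthogonal primitive idempotents have nonisomorphic
associated indecomposable projective right modules. -/
def IsBasicAlgebra : Prop :=
  ¬∃ e f : A, IsPrimitiveIdempotent A e ∧ IsPrimitiveIdempotent A f ∧
    e * f = 0 ∧ f * e = 0 ∧
    Nonempty ((Submodule.span Aᵐᵒᵖ {e} : Submodule Aᵐᵒᵖ A) ≃ₗ[Aᵐᵒᵖ]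
      (Submodule.span Aᵐᵒᵖ {f} : Submodule Aᵐᵒᵖ A))

end AlgebraSide

/-! ### Support algebras and faithful algebras of families of vertices -/

section Support

variable (A : Type u) [Ring A]

/-- The radical of a module: the intersection of its maximal submodules. -/
def modRadical (R : Type u) [Ring R] (M : Type u) [AddCommGroup M] [Module R M] :
    Submodule R M :=
  sInf {N | IsCoatom N}

/-- The intersection `ann_A(Γ)` of the annihilators of all right `A`-modules whose
vertices belong to `Γ`, as a two-sided ideal of `A`. -/
def annTwoSidedIdeal (Γ : Set (ARVertex Aᵐᵒᵖ)) : TwoSidedIdeal A :=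
  TwoSidedIdeal.mk'
    {a | ∀ x ∈ Γ, ∀ X : IndecModA Aᵐᵒᵖ, ARVertex.mk X = x →
      ∀ m : X.1.M, MulOpposite.op a • m = 0}
    (by intro x _ X _ m; simp)
    (by
      intro a b ha hb x hx X hX m
      have : MulOpposite.op (a + b) • m = MulOpposite.op a • m + MulOpposite.op b • m := by
        rw [← add_smul]; rfl
      rw [this, ha x hx X hX m, hb x hx X hX m, add_zero])
    (by
      intro a ha x hx X hX m
      have : MulOpposite.op (-a) • m = -(MulOpposite.op a • m) := by
        rw [← neg_smul]; rfl
      rw [this, ha x hx X hX m, neg_zero])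
    (by
      intro a b hb x hx X hX m
      have : MulOpposite.op (a * b) • m = MulOpposite.op b • (MulOpposite.op a • m) := by
        rw [← mul_smul]; rfl
      rw [this, hb x hx X hX _])
    (by
      intro a b ha x hx X hX m
      have : MulOpposite.op (a * b) • m = MulOpposite.op b • (MulOpposite.op a • m) := by
        rw [← mul_smul]; rfl
      rw [this, ha x hx X hX m, smul_zero])

/-- The faithful algebra `B(Γ) = A / ann_A(Γ)` of a family `Γ` of vertices of `Γ_A`. -/
abbrev faithfulAlg (Γ : Set (ARVertex Aᵐᵒᵖ)) : Type u :=
  (annTwoSidedIdeal A Γ).ringCon.Quotient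

/-- The canonical projection `A → B(Γ)`. -/
def faithfulProj (Γ : Set (ARVertex Aᵐᵒᵖ)) : A →+* faithfulAlg A Γ :=
  RingCon.mk' (annTwoSidedIdeal A Γ).ringCon

/-- The trace ideal `t_A(Γ)`: the two-sided ideal of `A` generated by the images of all
homomorphisms of right `A`-modules from `Q` to `A`. -/
def traceIdeal (Q : Submodule Aᵐᵒᵖ A) : TwoSidedIdeal A :=
  TwoSidedIdeal.span (⋃ f : ↥Q →ₗ[Aᵐᵒᵖ] A, Set.range f)

/-- A decomposition `A = P_Γ ⊕ Q_Γ` of `A` in `mod A` such that the simple summands of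
`P_Γ / rad P_Γ` are exactly the simple composition factors of the modules in `Γ`. -/
structure GammaDecomp (A : Type u) [Ring A] (Γ : Set (ARVertex Aᵐᵒᵖ)) where
  P : Submodule Aᵐᵒᵖ A
  Q : Submodule Aᵐᵒᵖ A
  compl : IsCompl P Q
  top_factors : ∀ (S : Type u) [AddCommGroup S] [Module Aᵐᵒᵖ S], IsSimpleModule Aᵐᵒᵖ S →
    (IsCompFactorMod Aᵐᵒᵖ S (↥P ⧸ modRadical Aᵐᵒᵖ ↥P) ↔
      ∃ x ∈ Γ, ∃ X : IndecModA Aᵐᵒᵖ, ARVertex.mk X = x ∧ IsCompFactorMod Aᵐᵒᵖ S X.1.M)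

end Support

/-- Restriction of scalars along a surjective ring homomorphism `π : A → B` identifies a
vertex `y` of `Γ_B` with a vertex `x` of `Γ_A`: representatives have the same underlying
group, with the `A`-action obtained from the `B`-action through `π`. -/
def VertexRestrictsTo {A B : Type u} [Ring A] [Ring B] (π : A →+* B)
    (y : ARVertex Bᵐᵒᵖ) (x : ARVertex Aᵐᵒᵖ) : Prop :=
  ∃ (N : IndecModA Bᵐᵒᵖ) (X : IndecModA Aᵐᵒᵖ), ARVertex.mk N = y ∧ ARVertex.mk X = x ∧
    ∃ e : X.1.M ≃+ N.1.M, ∀ (a : A) (m : X.1.M),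
      e (MulOpposite.op a • m) = MulOpposite.op (π a) • e m

/-! ### `K`-module structures on Hom-groups, lengths, and Ext -/

section KLength

variable (K B : Type u) [CommRing K] [Ring B] [Algebra K B]
variable (X N : Type u) [AddCommGroup X] [Module B X] [AddCommGroup N] [Module B N]

/-- The action of `K` on `B`-linear maps, through `algebraMap K B`. -/
def homKSMul (k : K) (f : X →ₗ[B] N) : X →ₗ[B] N where
  toFun x := algebraMap K B k • f x
  map_add' x y := by show algebraMap K B k • f (x + y) = _; rw [map_add, smul_add]
  map_smul' b x := by
    simp only [map_smul, RingHom.id_apply, smul_smul]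
    rw [Algebra.commutes]

/-- The `K`-module structure on the group of `B`-linear maps. -/
def homKModule : Module K (X →ₗ[B] N) where
  smul := homKSMul K B X N
  one_smul f := LinearMap.ext fun x => by
    show algebraMap K B 1 • f x = f x
    rw [map_one, one_smul]
  mul_smul k l f := LinearMap.ext fun x => by
    show algebraMap K B (k * l) • f x = algebraMap K B k • algebraMap K B l • f x
    rw [map_mul, mul_smul]
  smul_zero k := LinearMap.ext fun x => by
    show algebraMap K B k • (0 : X →ₗ[B] N) x = 0
    simp
  smul_add k f g := LinearMap.ext fun x => by
    show algebraMap K B k • (f + g) x = algebraMap K B k • f x + algebraMap K B k • g x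
    simp [smul_add]
  add_smul k l f := LinearMap.ext fun x => by
    show algebraMap K B (k + l) • f x = algebraMap K B k • f x + algebraMap K B l • f x
    rw [map_add, add_smul]
  zero_smul f := LinearMap.ext fun x => by
    show algebraMap K B 0 • f x = 0
    rw [map_zero, zero_smul]

/-- The length `|Hom_B(X, N)|` of the group of `B`-linear maps `X → N` as a `K`-module. -/
noncomputable def homKLength : WithBot ℕ∞ :=
  letI : Module K (X →ₗ[B] N) := homKModule K B X N
  Order.krullDim (Submodule K (X →ₗ[B] N))

/-- The canonical surjection from the free module on (the underlying set of) `X` to `X`. -/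
noncomputable def freeCover : (X →₀ B) →ₗ[B] X :=
  Finsupp.linearCombination B id

/-- The length `|Ext¹_B(X, N)|` of `Ext¹` as a `K`-module, computed as the cokernel of
`Hom_B(F, N) → Hom_B(Ω X, N)` for the canonical free cover `F → X` with kernel `Ω X`. -/
noncomputable def ext1KLength : WithBot ℕ∞ :=
  letI : Module K (↥(LinearMap.ker (freeCover B X)) →ₗ[B] N) :=
    homKModule K B (↥(LinearMap.ker (freeCover B X))) N
  let D : Submodule K (↥(LinearMap.ker (freeCover B X)) →ₗ[B] N) :=
    { carrier := {f | ∃ g : (X →₀ B) →ₗ[B] N,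
        f = g.comp (LinearMap.ker (freeCover B X)).subtype}
      add_mem' := by
        rintro f₁ f₂ ⟨g₁, rfl⟩ ⟨g₂, rfl⟩
        exact ⟨g₁ + g₂, rfl⟩
      zero_mem' := ⟨0, rfl⟩
      smul_mem' := by
        rintro k f ⟨g, rfl⟩
        exact ⟨homKSMul K B _ N k g, rfl⟩ }
  Order.krullDim (Submodule K ((↥(LinearMap.ker (freeCover B X)) →ₗ[B] N) ⧸ D))

end KLength

/-- Vanishing of `Ext¹_B(X, N)`: every short exact sequence `0 → N → E → X → 0` splits. -/
def Ext1IsZero (B : Type u) [Ring B] (X : Type u) [AddCommGroup X] [Module B X]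
    (N : Type u) [AddCommGroup N] [Module B N] : Prop :=
  ∀ (E : Type u) [AddCommGroup E] [Module B E], ∀ (f : N →ₗ[B] E) (g : E →ₗ[B] X),
    Function.Injective f → Function.Surjective g → LinearMap.range f = LinearMap.ker g →
    ∃ s : X →ₗ[B] E, g.comp s = LinearMap.id

/-- The syzygy `Ω X`: the kernel of the canonical free cover of `X`. -/
noncomputable def syzygyRaw (B : Type u) [Ring B] (X : RawMod B) : RawMod B :=
  ⟨↥(LinearMap.ker (freeCover B X.M))⟩

/-- Iterated syzygies. -/
noncomputable def syzygyIter (B : Type u) [Ring B] : ℕ → RawMod B → RawMod B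
  | 0, X => X
  | n + 1, X => syzygyRaw B (syzygyIter B n X)

/-- Vanishing of `Ext^r_B(X, N)` for `r ≥ 1`, via `Ext^r(X, N) ≅ Ext¹(Ω^{r-1} X, N)`. -/
noncomputable def ExtIsZero (B : Type u) [Ring B] (X N : RawMod B) (r : ℕ) : Prop :=
  Ext1IsZero B (syzygyIter B (r - 1) X).M N.M

/-- `[X] = [M]` in the Grothendieck group `K₀`: the modules `X` and `M` have the same
composition factors including multiplicities. -/
def SameCompFactors {B : Type u} [Ring B] (X M : ModA B) : Prop :=
  ∃ (n : ℕ) (s : Fin (n + 1) → Submodule B X.M) (t : Fin (n + 1) → Submodule B M.M)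
    (σ : Equiv.Perm (Fin n)),
    s 0 = ⊥ ∧ s (Fin.last n) = ⊤ ∧ t 0 = ⊥ ∧ t (Fin.last n) = ⊤ ∧
    (∀ i : Fin n, s i.castSucc ≤ s i.succ) ∧ (∀ i : Fin n, t i.castSucc ≤ t i.succ) ∧
    ∀ i : Fin n,
      IsSimpleModule B (↥(s i.succ) ⧸ (s i.castSucc).comap (s i.succ).subtype) ∧
      Nonempty ((↥(s i.succ) ⧸ (s i.castSucc).comap (s i.succ).subtype) ≃ₗ[B]
        (↥(t (σ i).succ) ⧸ (t (σ i).castSucc).comap (t (σ i).succ).subtype))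

/-- A torsion class in `mod B`: a class of modules closed under factor modules and
extensions. -/
def IsTorsionClass (B : Type u) [Ring B] (T : Set (ModA B)) : Prop :=
  (∀ M ∈ T, ∀ (N : ModA B) (g : M.M →ₗ[B] N.M), Function.Surjective g → N ∈ T) ∧
  ∀ (X E M : ModA B) (f : X.M →ₗ[B] E.M) (g : E.M →ₗ[B] M.M),
    Function.Injective f → Function.Surjective g → LinearMap.range f = LinearMap.ker g →
    X ∈ T → M ∈ T → E ∈ T

/-- A torsion class is functorially finite iff it is of the form `Fac(M)`. -/
def IsFunctoriallyFinite (B : Type u) [Ring B] (T : Set (ModA B)) : Prop :=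
  ∃ M : ModA B,
    T = {N | ∃ (k : ℕ) (g : (Fin k → M.M) →ₗ[B] N.M), Function.Surjective g}

/-- A module `M` is `τ`-rigid if `Hom(M, τM) = 0`. -/
def IsTauRigid {B : Type u} [Ring B] (M : ModA B) : Prop :=
  ∀ N : ModA B, IsTauOf N M → ∀ f : M.M →ₗ[B] N.M, f = 0

/-- A module `M` is rigid if `Ext¹(M, M) = 0`. -/
def IsRigid {B : Type u} [Ring B] (M : ModA B) : Prop := Ext1IsZero B M.M M.M

/-- `α(M) ≤ 2`: the middle term of any almost split sequence ending at `M` has at most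
two indecomposable direct summands. -/
def AlphaLe2 {B : Type u} [Ring B] (M : ModA B) : Prop :=
  ∀ s : AlmostSplitSeq B, s.r.Iso M →
    ∀ (k : ℕ) (N : Fin k → Submodule B s.m.M),
      (∀ i, IsIndecMod B ↥(N i)) → iSupIndep N → (⨆ i, N i) = ⊤ → k ≤ 2


namespace SA

section KS

variable {R : Type u} [Ring R]

instance instNoeth (X : ModA R) : IsNoetherian R X.M :=
  (isFiniteLength_iff_isNoetherian_isArtinian.mp X.finLen).1

instance instArtin (X : ModA R) : IsArtinian R X.M :=
  (isFiniteLength_iff_isNoetherian_isArtinian.mp X.finLen).2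

/-- Bundling a module of finite length. -/
abbrev of (R : Type u) [Ring R] (M : Type u) [AddCommGroup M] [Module R M] [IsNoetherian R M]
    [IsArtinian R M] : ModA R :=
  ⟨M, isFiniteLength_iff_isNoetherian_isArtinian.mpr ⟨inferInstance, inferInstance⟩⟩

lemma bij_or_nilp {X : ModA R} (hX : X.IsIndec) (f : Module.End R X.M) :
    Function.Bijective f ∨ IsNilpotent f := by
  obtain ⟨k, hk⟩ := Filter.eventually_atTop.mp f.eventually_isCompl_ker_pow_range_pow
  have h := hk (k + 1) (Nat.le_succ k)
  set e : Module.End R X.M := Submodule.projection _ _ h with he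
  have hee : e * e = e := by
    ext x
    simp only [Module.End.mul_apply]
    exact Submodule.projection_apply_left h ⟨e x, Submodule.projection_apply_mem h x⟩
  rcases hX.2 e hee with h0 | h1
  · left
    have hker : LinearMap.ker (f ^ (k + 1)) = ⊥ := by
      rw [eq_bot_iff]
      intro x hx
      have := Submodule.projection_apply_left h ⟨x, hx⟩
      rw [← he, h0] at this
      simpa using this.symm
    have hinj : Function.Injective f := by
      intro x y hxy
      have : Function.Injective (f ^ (k + 1)) := LinearMap.ker_eq_bot.mp hker
      apply this
      rw [pow_succ, Module.End.mul_apply, Module.End.mul_apply, hxy]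
    exact IsArtinian.bijective_of_injective_endomorphism f hinj
  · right
    refine ⟨k + 1, ?_⟩
    ext x
    have := Submodule.projection_apply_mem h x
    rw [← he, h1] at this
    simpa using this

lemma bij_of_sum {X : ModA R} (hX : X.IsIndec) (f g : Module.End R X.M)
    (h : f + g = LinearMap.id) : Function.Bijective f ∨ Function.Bijective g := by
  rcases bij_or_nilp hX f with hf | hf
  · exact Or.inl hf
  · right
    have hg : g = 1 - f := by
      rw [eq_sub_iff_add_eq, add_comm]; exact h
    have : IsUnit g := by rw [hg]; exact hf.isUnit_one_sub
    exact (Module.End.isUnit_iff g).mp this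

lemma split_of_bij_comp {X V : ModA R} {a : V.M →ₗ[R] X.M} {b : X.M →ₗ[R] V.M}
    (h : Function.Bijective (b.comp a)) : ∃ s : V.M →ₗ[R] V.M,
      (s.comp b).comp a = LinearMap.id ∧ b.comp (a.comp s) = LinearMap.id := by
  let e := LinearEquiv.ofBijective _ h
  refine ⟨e.symm.toLinearMap, ?_, ?_⟩
  · ext x; exact e.symm_apply_apply x
  · ext x; exact e.apply_symm_apply x

lemma splitMono_of_bij_comp {X V : ModA R} {a : V.M →ₗ[R] X.M} {b : X.M →ₗ[R] V.M}
    (h : Function.Bijective (b.comp a)) : SplitMonoMap a := by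
  obtain ⟨s, h1, -⟩ := split_of_bij_comp h
  exact ⟨_, h1⟩

lemma splitEpi_of_bij_comp {X V : ModA R} {a : V.M →ₗ[R] X.M} {b : X.M →ₗ[R] V.M}
    (h : Function.Bijective (b.comp a)) : SplitEpiMap b := by
  obtain ⟨s, -, h1⟩ := split_of_bij_comp h
  exact ⟨_, h1⟩

lemma bij_of_splitMono {X V : ModA R} (hV : V.IsIndec) (hX : X.IsIndec) {a : V.M →ₗ[R] X.M}
    (h : SplitMonoMap a) : Function.Bijective a := by
  obtain ⟨s, hs⟩ := h
  have hs' : ∀ x, s (a x) = x := fun x => LinearMap.congr_fun hs x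
  have hinj : Function.Injective a := Function.LeftInverse.injective hs'
  refine ⟨hinj, ?_⟩
  have hee : (a.comp s : Module.End R X.M) * (a.comp s) = a.comp s := by
    ext x; simp [hs']
  rcases hX.2 _ hee with h0 | h1
  · exfalso
    have := hV.1
    obtain ⟨v, hv⟩ := exists_ne (0 : V.M)
    apply hv
    have := LinearMap.congr_fun h0 (a v)
    simp only [LinearMap.comp_apply, hs', LinearMap.zero_apply] at this
    rw [← hs' v, this, map_zero]
  · intro x
    exact ⟨s x, LinearMap.congr_fun h1 x⟩

lemma splitEpi_of_bij {X V : ModA R} {a : V.M →ₗ[R] X.M}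
    (h : Function.Bijective a) : SplitEpiMap a :=
  ⟨(LinearEquiv.ofBijective a h).symm.toLinearMap, by
    ext x; exact (LinearEquiv.ofBijective a h).apply_symm_apply x⟩

lemma splitMono_of_bij {X V : ModA R} {a : V.M →ₗ[R] X.M}
    (h : Function.Bijective a) : SplitMonoMap a :=
  ⟨(LinearEquiv.ofBijective a h).symm.toLinearMap, by
    ext x; exact (LinearEquiv.ofBijective a h).symm_apply_apply x⟩

lemma bij_of_splitEpi {X V : ModA R} (hV : V.IsIndec) (hX : X.IsIndec) {a : V.M →ₗ[R] X.M}
    (h : SplitEpiMap a) : Function.Bijective a := by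
  obtain ⟨s, hs⟩ := h
  have hb : Function.Bijective s := bij_of_splitMono hX hV ⟨a, hs⟩
  have hs' : ∀ x, a (s x) = x := fun x => LinearMap.congr_fun hs x
  refine ⟨?_, Function.RightInverse.surjective hs'⟩
  intro x y hxy
  obtain ⟨x', rfl⟩ := hb.2 x
  obtain ⟨y', rfl⟩ := hb.2 y
  rw [hs', hs'] at hxy
  rw [hxy]

lemma inRad_of_not_splitMono {X Z : ModA R} (hX : X.IsIndec) {g : X.M →ₗ[R] Z.M}
    (h : ¬ SplitMonoMap g) : InRad g := by
  intro V hV a b hb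
  have h1 : Function.Bijective ((b.comp g).comp a) := hb
  have ha := bij_of_splitMono hV hX (splitMono_of_bij_comp h1)
  obtain ⟨s, hs⟩ := splitMono_of_bij_comp h1
  obtain ⟨t, h2, -⟩ := split_of_bij_comp (a := a) (b := b.comp g) h1
  apply h
  refine ⟨a.comp (t.comp b), ?_⟩
  ext x
  obtain ⟨y, rfl⟩ := ha.2 x
  have := LinearMap.congr_fun h2 y
  simp only [LinearMap.comp_apply, LinearMap.id_apply] at this ⊢
  rw [this]

lemma inRad_of_not_splitEpi {Z Y : ModA R} (hY : Y.IsIndec) {g : Z.M →ₗ[R] Y.M}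
    (h : ¬ SplitEpiMap g) : InRad g := by
  intro V hV a b hb
  have hb' : Function.Bijective b := bij_of_splitEpi hY hV (splitEpi_of_bij_comp hb)
  obtain ⟨t, -, h2⟩ := split_of_bij_comp (a := g.comp a) (b := b) hb
  apply h
  refine ⟨a.comp (t.comp b), ?_⟩
  ext x
  have := LinearMap.congr_fun h2 (b x)
  exact hb'.1 this

/-- A decomposition into indecomposables. -/
def Dec (Z : ModA R) : Prop :=
  ∃ (J : Type) (_ : Fintype J) (V : J → ModA R) (i : ∀ j, (V j).M →ₗ[R] Z.M)
    (p : ∀ j, Z.M →ₗ[R] (V j).M), (∀ j, (V j).IsIndec) ∧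
    (∀ j, (p j).comp (i j) = LinearMap.id) ∧ (∀ z, ∑ j, i j (p j z) = z)

lemma dec_of_two {Z Z1 Z2 : ModA R} (i1 : Z1.M →ₗ[R] Z.M) (p1 : Z.M →ₗ[R] Z1.M)
    (i2 : Z2.M →ₗ[R] Z.M) (p2 : Z.M →ₗ[R] Z2.M) (h1 : p1.comp i1 = LinearMap.id)
    (h2 : p2.comp i2 = LinearMap.id) (h : ∀ z, i1 (p1 z) + i2 (p2 z) = z)
    (d1 : Dec Z1) (d2 : Dec Z2) : Dec Z := by
  obtain ⟨J1, _, V1, a1, b1, hi1, hp1, hs1⟩ := d1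
  obtain ⟨J2, _, V2, a2, b2, hi2, hp2, hs2⟩ := d2
  refine ⟨J1 ⊕ J2, inferInstance, Sum.elim V1 V2,
    fun j => match j with
      | .inl j => i1.comp (a1 j)
      | .inr j => i2.comp (a2 j),
    fun j => match j with
      | .inl j => (b1 j).comp p1
      | .inr j => (b2 j).comp p2, ?_, ?_, ?_⟩
  · rintro (j | j)
    · exact hi1 j
    · exact hi2 j
  · rintro (j | j)
    · ext x
      change b1 j (p1 (i1 (a1 j x))) = x
      exact (congrArg (b1 j) (LinearMap.congr_fun h1 (a1 j x))).trans
        (LinearMap.congr_fun (hp1 j) x)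
    · ext x
      change b2 j (p2 (i2 (a2 j x))) = x
      exact (congrArg (b2 j) (LinearMap.congr_fun h2 (a2 j x))).trans
        (LinearMap.congr_fun (hp2 j) x)
  · intro z
    rw [Fintype.sum_sum_type]
    change (∑ x, i1 (a1 x (b1 x (p1 z)))) + ∑ x, i2 (a2 x (b2 x (p2 z))) = z
    rw [← map_sum, ← map_sum, hs1, hs2, h]

lemma dec_exists (Z : ModA R) : Dec Z := by
  suffices H : ∀ (n : ℕ) (Z : ModA R), Module.length R Z.M < n → Dec Z by
    obtain ⟨n, hn⟩ := ENat.ne_top_iff_exists.mp (Module.length_ne_top (R := R) (M := Z.M))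
    refine H (n + 1) Z ?_
    rw [← hn]
    exact_mod_cast Nat.lt_succ_self n
  intro n
  induction n with
  | zero => intro Z h; simp at h
  | succ n ih =>
    intro Z hZ
    by_cases hnt : Nontrivial Z.M
    · by_cases hind : Z.IsIndec
      · refine ⟨Unit, inferInstance, fun _ => Z, fun _ => LinearMap.id, fun _ => LinearMap.id,
          fun _ => hind, fun _ => rfl, fun z => by simp⟩
      · have : ∃ f : Module.End R Z.M, f * f = f ∧ f ≠ 0 ∧ f ≠ 1 := by
          by_contra hcon
          push Not at hcon
          apply hind
          refine ⟨hnt, fun f hf => ?_⟩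
          by_cases h0 : f = 0
          · exact Or.inl h0
          · exact Or.inr (hcon f hf h0)
        obtain ⟨f, hf, h0, h1⟩ := this
        have hff : ∀ x, f (f x) = f x := fun x => LinearMap.congr_fun hf x
        have hr : LinearMap.range f ≠ ⊤ := by
          intro htop
          apply h1
          ext x
          obtain ⟨y, rfl⟩ := LinearMap.range_eq_top.mp htop x
          simp [hff]
        have hk : LinearMap.ker f ≠ ⊤ := by
          intro htop
          exact h0 (LinearMap.ker_eq_top.mp htop)
        have hle : ∀ a b : ℕ∞, a < b → b < ((n + 1 : ℕ) : ℕ∞) → a < n := by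
          intro a b hab hb
          have : b ≤ n := by
            push_cast at hb
            exact Order.lt_add_one_iff_of_not_isMax (by simp) |>.mp hb
          exact lt_of_lt_of_le hab this
        refine dec_of_two (Z := Z) (Z1 := of R (LinearMap.range f)) (Z2 := of R (LinearMap.ker f))
          (LinearMap.range f).subtype f.rangeRestrict (LinearMap.ker f).subtype
          (LinearMap.codRestrict (LinearMap.ker f) (1 - f) (fun x => by simp [hff])) ?_ ?_ ?_
          (ih _ (hle _ _ (Submodule.length_lt hr) hZ)) (ih _ (hle _ _ (Submodule.length_lt hk) hZ))
        · ext ⟨x, y, rfl⟩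
          simp [hff]
        · ext ⟨x, hx⟩
          have : f x = 0 := hx
          simp [this]
        · intro z
          simp
    · refine ⟨Empty, inferInstance, fun j => j.elim, fun j => j.elim, fun j => j.elim,
        fun j => j.elim, fun j => j.elim, fun z => ?_⟩
      rw [not_nontrivial_iff_subsingleton] at hnt
      exact Subsingleton.elim _ _

end KS

end SA


namespace SA

section RadPaths

variable {R : Type u} [Ring R]

lemma inRad_comp_right {X Y Z : ModA R} {f : Y.M →ₗ[R] Z.M} (hf : InRad f)
    (g : X.M →ₗ[R] Y.M) : InRad (f.comp g) := by
  intro V hV a b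
  exact hf V hV (g.comp a) b

lemma inRad_comp_left {X Y Z : ModA R} {f : X.M →ₗ[R] Y.M} (hf : InRad f)
    (g : Y.M →ₗ[R] Z.M) : InRad (g.comp f) := by
  intro V hV a b
  exact hf V hV a (b.comp g)

lemma radPow_comp_right (n : ℕ) {X Y Z : ModA R} {f : Y.M →ₗ[R] Z.M} (hf : f ∈ radPow R n Y Z)
    (g : X.M →ₗ[R] Y.M) : f.comp g ∈ radPow R n X Z := by
  cases n with
  | zero => exact AddSubgroup.mem_top _
  | succ n =>
    have : radPow R (n + 1) Y Z ≤ (radPow R (n + 1) X Z).comap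
        (⟨⟨fun f => f.comp g, by simp⟩, fun a b => by ext; simp⟩ :
          (Y.M →ₗ[R] Z.M) →+ (X.M →ₗ[R] Z.M)) := by
      rw [radPow, AddSubgroup.closure_le]
      rintro _ ⟨W, g', h, hg', hh, rfl⟩
      refine AddSubgroup.subset_closure ⟨W, g'.comp g, h, inRad_comp_right hg' g, hh, rfl⟩
    exact this hf

lemma radPow_succ_of {n : ℕ} {X Y Z : ModA R} {h : Z.M →ₗ[R] Y.M} (hh : h ∈ radPow R n Z Y)
    {g : X.M →ₗ[R] Z.M} (hg : InRad g) : h.comp g ∈ radPow R (n + 1) X Y :=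
  AddSubgroup.subset_closure ⟨Z, g, h, hg, hh, rfl⟩

lemma mk_eq_of_bij {X Y : IndecModA R} {f : X.1.M →ₗ[R] Y.1.M} (hf : Function.Bijective f) :
    ARVertex.mk X = ARVertex.mk Y :=
  Quotient.sound (s := isoSetoid R) ⟨LinearEquiv.ofBijective f hf⟩

lemma not_inRad_of_id {X : ModA R} (hX : X.IsIndec) {f : X.M →ₗ[R] X.M}
    (h : f = LinearMap.id) : ¬ InRad f := by
  intro hr
  subst h
  exact hr X hX LinearMap.id LinearMap.id Function.bijective_id

lemma not_splitMono_of_inRad {X Y : ModA R} (hX : X.IsIndec) {f : X.M →ₗ[R] Y.M}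
    (h : InRad f) : ¬ SplitMonoMap f := by
  rintro ⟨r, hr⟩
  exact not_inRad_of_id hX hr (inRad_comp_left h r)

lemma not_splitEpi_of_inRad {X Y : ModA R} (hY : Y.IsIndec) {f : X.M →ₗ[R] Y.M}
    (h : InRad f) : ¬ SplitEpiMap f := by
  rintro ⟨r, hr⟩
  exact not_inRad_of_id hY hr (inRad_comp_right h r)

lemma ar_path_of_rad (n : ℕ) : ∀ (X Y : IndecModA R) (f : X.1.M →ₗ[R] Y.1.M),
    f ∈ radPow R n X.1 Y.1 → f ∉ radPow R (n + 1) X.1 Y.1 →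
    Relation.ReflTransGen ARArrow (ARVertex.mk X) (ARVertex.mk Y) := by
  induction n with
  | zero =>
    intro X Y f _ hf
    have hnr : ¬ InRad f := by
      intro hr
      exact hf (radPow_succ_of (h := LinearMap.id) (AddSubgroup.mem_top _) hr)
    have hb : Function.Bijective f := by
      apply bij_of_splitMono X.2 Y.2
      by_contra hcon
      exact hnr (inRad_of_not_splitMono X.2 hcon)
    rw [mk_eq_of_bij hb]
  | succ n ih =>
    intro X Y f hf hf2
    have hgen : ∃ (Z : ModA R) (g : X.1.M →ₗ[R] Z.M) (h : Z.M →ₗ[R] Y.1.M),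
        InRad g ∧ h ∈ radPow R n Z Y.1 ∧ h.comp g ∉ radPow R (n + 2) X.1 Y.1 := by
      by_contra hcon
      push Not at hcon
      apply hf2
      have : radPow R (n + 1) X.1 Y.1 ≤ radPow R (n + 2) X.1 Y.1 := by
        conv_lhs => rw [radPow]
        rw [AddSubgroup.closure_le]
        rintro _ ⟨Z, g, h, hg, hh, rfl⟩
        exact hcon Z g h hg hh
      exact this hf
    obtain ⟨Z, g, h, hg, hh, hn⟩ := hgen
    obtain ⟨J, _, V, i, p, hV, hpi, hs⟩ := dec_exists Z
    have hj : ∃ j, (h.comp (i j)).comp ((p j).comp g) ∉ radPow R (n + 2) X.1 Y.1 := by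
      by_contra hcon
      push Not at hcon
      apply hn
      have : h.comp g = ∑ j, (h.comp (i j)).comp ((p j).comp g) := by
        ext x
        conv_lhs => rw [LinearMap.comp_apply, ← hs (g x), map_sum]
        simp
      rw [this]
      exact sum_mem fun j _ => hcon j
    obtain ⟨j, hj⟩ := hj
    have hhi := radPow_comp_right n hh (i j)
    have hpg : InRad ((p j).comp g) := inRad_comp_left hg (p j)
    have hhi2 : h.comp (i j) ∉ radPow R (n + 1) (V j) Y.1 := by
      intro hc
      exact hj (radPow_succ_of hc hpg)
    have path := ih ⟨V j, hV j⟩ Y (h.comp (i j)) hhi hhi2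
    refine Relation.ReflTransGen.head ⟨X, ⟨V j, hV j⟩, (p j).comp g, ⟨?_, ?_, ?_⟩, rfl, rfl⟩ path
    · exact not_splitMono_of_inRad X.2 hpg
    · exact not_splitEpi_of_inRad (hV j) hpg
    · intro W a b hab
      by_contra hcon
      push Not at hcon
      have ha := inRad_of_not_splitMono X.2 hcon.1
      have hb := inRad_of_not_splitEpi (hV j) hcon.2
      apply hj
      change (h.comp (i j)).comp ((p j).comp g) ∈ _
      rw [← hab, ← LinearMap.comp_assoc]
      exact radPow_succ_of (radPow_succ_of hhi hb) ha

lemma ar_path_of_not_inRadInf {X Y : IndecModA R} {f : X.1.M →ₗ[R] Y.1.M}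
    (h : ¬ InRadInf f) : Relation.ReflTransGen ARArrow (ARVertex.mk X) (ARVertex.mk Y) := by
  classical
  unfold InRadInf at h
  push Not at h
  have h0 : Nat.find h ≠ 0 := by
    intro h0
    have := Nat.find_spec h
    rw [h0] at this
    exact this (AddSubgroup.mem_top _)
  obtain ⟨n, hn⟩ := Nat.exists_eq_succ_of_ne_zero h0
  refine ar_path_of_rad n X Y f ?_ ?_
  · have := Nat.find_min h (m := n) (by omega)
    push Not at this
    exact this
  · have := Nat.find_spec h
    rwa [hn] at this

end RadPaths

end SA


namespace SA

section Torsion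

variable {R : Type u} [Ring R]

lemma lift_inj {X Y Z : ModA R} (a : Y.M →ₗ[R] Z.M) (ha : Function.Injective a)
    (f : X.M →ₗ[R] Z.M) (h : ∀ x, ∃ y, a y = f x) : ∃ s : X.M →ₗ[R] Y.M, a.comp s = f := by
  refine ⟨(LinearEquiv.ofInjective a ha).symm.toLinearMap.comp
    (f.codRestrict (LinearMap.range a) (fun x => h x)), ?_⟩
  ext x
  have := (LinearEquiv.ofInjective a ha).apply_symm_apply
    (f.codRestrict (LinearMap.range a) (fun x => h x) x)
  exact congrArg Subtype.val this

lemma desc_surj {X Y Z : ModA R} (b : X.M →ₗ[R] Y.M) (hb : Function.Surjective b)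
    (f : X.M →ₗ[R] Z.M) (h : ∀ x, b x = 0 → f x = 0) :
    ∃ s : Y.M →ₗ[R] Z.M, s.comp b = f := by
  refine ⟨((LinearMap.ker b).liftQ f (fun x hx => h x hx)).comp
    (b.quotKerEquivOfSurjective hb).symm.toLinearMap, ?_⟩
  ext x
  have : (b.quotKerEquivOfSurjective hb).symm (b x) = (LinearMap.ker b).mkQ x := by
    rw [LinearEquiv.symm_apply_eq]
    simp
  change ((LinearMap.ker b).liftQ f (fun x hx => h x hx))
    ((b.quotKerEquivOfSurjective hb).symm (b x)) = f x
  rw [this]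
  rfl

variable (Pd : ModA R → Prop)

/-- Closure under predecessors. -/
def ClosedPd : Prop := ∀ (S T : ModA R), S.IsIndec → T.IsIndec →
  ∀ f : S.M →ₗ[R] T.M, f ≠ 0 → Pd T → Pd S

/-- Torsion-free class. -/
def FF (Z : ModA R) : Prop :=
  ∀ T : ModA R, T.IsIndec → ∀ t : T.M →ₗ[R] Z.M, t ≠ 0 → Pd T

/-- Torsion class. -/
def TT (W : ModA R) : Prop :=
  ∀ V : ModA R, V.IsIndec → ∀ w : W.M →ₗ[R] V.M, w ≠ 0 → ¬ Pd V

variable {Pd}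

lemma ff_of_indec (hcl : ClosedPd Pd) {Z : ModA R} (hZ : Z.IsIndec) (h : Pd Z) : FF Pd Z :=
  fun T hT t ht => hcl T Z hT hZ t ht h

lemma tt_of_indec (hcl : ClosedPd Pd) {Z : ModA R} (hZ : Z.IsIndec) (h : ¬ Pd Z) : TT Pd Z :=
  fun T hT t ht h' => h (hcl Z T hZ hT t ht h')

lemma ne_zero_of_comp_id {V Z : ModA R} (hV : V.IsIndec) {i : V.M →ₗ[R] Z.M}
    {p : Z.M →ₗ[R] V.M} (h : p.comp i = LinearMap.id) : i ≠ 0 ∧ p ≠ 0 := by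
  have := hV.1
  obtain ⟨v, hv⟩ := exists_ne (0 : V.M)
  have h1 := LinearMap.congr_fun h v
  constructor
  · rintro rfl
    apply hv
    simpa using h1.symm
  · rintro rfl
    apply hv
    simpa using h1.symm

lemma hom_tt_ff {W Z : ModA R} (hW : TT Pd W) (hZ : FF Pd Z) (f : W.M →ₗ[R] Z.M) : f = 0 := by
  obtain ⟨J, _, V, i, p, hV, hpi, hs⟩ := dec_exists Z
  ext x
  rw [← hs (f x)]
  simp only [LinearMap.zero_apply]
  refine Finset.sum_eq_zero fun j _ => ?_
  have h1 : Pd (V j) := hZ (V j) (hV j) (i j) (ne_zero_of_comp_id (hV j) (hpi j)).1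
  have h2 : (p j).comp f = 0 := by
    by_contra hne
    exact hW (V j) (hV j) _ hne h1
  have := LinearMap.congr_fun h2 x
  simp only [LinearMap.comp_apply, LinearMap.zero_apply] at this
  rw [this, map_zero]

lemma torsion_idem (G : ModA R) : ∃ e : G.M →ₗ[R] G.M,
    (∀ W : ModA R, TT Pd W → ∀ φ : W.M →ₗ[R] G.M, e.comp φ = φ) ∧
    (∀ Z : ModA R, FF Pd Z → ∀ ψ : G.M →ₗ[R] Z.M, ψ.comp e = 0) := by
  classical
  obtain ⟨J, _, V, i, p, hV, hpi, hs⟩ := dec_exists G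
  refine ⟨∑ j, if Pd (V j) then 0 else (i j).comp (p j), ?_, ?_⟩
  · intro W hW φ
    ext x
    conv_rhs => rw [← hs (φ x)]
    simp only [LinearMap.comp_apply, LinearMap.sum_apply]
    refine Finset.sum_congr rfl fun j _ => ?_
    split_ifs with h
    · have h2 : (p j).comp φ = 0 := by
        by_contra hne
        exact hW (V j) (hV j) _ hne h
      have := LinearMap.congr_fun h2 x
      simp only [LinearMap.comp_apply, LinearMap.zero_apply] at this
      rw [this, map_zero, LinearMap.zero_apply]
    · rfl
  · intro Z hZ ψ
    ext x
    simp only [LinearMap.comp_apply, LinearMap.sum_apply, map_sum, LinearMap.zero_apply]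
    refine Finset.sum_eq_zero fun j _ => ?_
    split_ifs with h
    · simp
    · have h2 : ψ.comp (i j) = 0 := by
        by_contra hne
        exact h (hZ (V j) (hV j) _ hne)
      exact LinearMap.congr_fun h2 (p j x)

variable (Pd)

/-- Splitting of extensions by torsion-free modules. -/
def SplitP (U : ModA R) : Prop := ∀ (G Z : ModA R) (a : U.M →ₗ[R] G.M) (b : G.M →ₗ[R] Z.M),
  Function.Injective a → (∀ x, b x = 0 ↔ ∃ y, a y = x) → FF Pd Z → SplitMonoMap a

/-- Extension of maps along torsion-free cokernels. -/
def ExtP (U : ModA R) : Prop := ∀ (K M Z : ModA R) (a : K.M →ₗ[R] M.M) (b : M.M →ₗ[R] Z.M),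
  Function.Injective a → (∀ x, b x = 0 ↔ ∃ y, a y = x) → FF Pd Z →
    ∀ r : K.M →ₗ[R] U.M, ∃ r' : M.M →ₗ[R] U.M, r'.comp a = r

variable {Pd}

lemma splitP_of_tt {Y : ModA R} (hY : TT Pd Y) : SplitP Pd Y := by
  intro G Z a b ha hab hZ
  obtain ⟨e, he1, he2⟩ := torsion_idem (Pd := Pd) G
  obtain ⟨s, hs⟩ := lift_inj a ha e (fun x => (hab _).mp (LinearMap.congr_fun (he2 Z hZ b) x))
  refine ⟨s, ?_⟩
  ext y
  apply ha
  have h1 := LinearMap.congr_fun hs (a y)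
  have h2 := LinearMap.congr_fun (he1 Y hY a) y
  exact h1.trans h2

lemma pushout {K M U : ModA R} (a : K.M →ₗ[R] M.M) (r : K.M →ₗ[R] U.M) :
    ∃ (E : ModA R) (a' : U.M →ₗ[R] E.M) (m : M.M →ₗ[R] E.M),
      (∀ k, m (a k) = a' (r k)) ∧ (∀ x, ∃ u y, a' u + m y = x) ∧
      (∀ u y, a' u + m y = 0 → ∃ k, u = r k ∧ y = - a k) ∧
      (∀ (Z : ModA R) (b : M.M →ₗ[R] Z.M) (c : U.M →ₗ[R] Z.M), (∀ k, b (a k) = c (r k)) →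
        ∃ b' : E.M →ₗ[R] Z.M, (∀ u, b' (a' u) = c u) ∧ (∀ y, b' (m y) = b y)) := by
  let N : Submodule R (U.M × M.M) := LinearMap.range (r.prod (-a))
  refine ⟨of R ((U.M × M.M) ⧸ N), N.mkQ.comp (LinearMap.inl R U.M M.M),
    N.mkQ.comp (LinearMap.inr R U.M M.M), ?_, ?_, ?_, ?_⟩
  · intro k
    change N.mkQ (0, a k) = N.mkQ (r k, 0)
    rw [← sub_eq_zero, ← map_sub]
    refine (Submodule.Quotient.mk_eq_zero N).mpr ⟨-k, ?_⟩
    simp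
  · intro x
    obtain ⟨⟨u, y⟩, rfl⟩ := N.mkQ_surjective x
    refine ⟨u, y, ?_⟩
    change N.mkQ (u, 0) + N.mkQ (0, y) = N.mkQ (u, y)
    rw [← map_add]
    simp
  · intro u y h
    change N.mkQ (u, 0) + N.mkQ (0, y) = 0 at h
    rw [← map_add] at h
    obtain ⟨k, hk⟩ := (Submodule.Quotient.mk_eq_zero N).mp h
    refine ⟨k, ?_, ?_⟩
    · have := congrArg Prod.fst hk
      simpa using this.symm
    · have := congrArg Prod.snd hk
      simpa using this.symm
  · intro Z b c hbc
    refine ⟨N.liftQ (c.coprod b) ?_, ?_, ?_⟩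
    · rintro _ ⟨k, rfl⟩
      simp [hbc]
    · intro u
      change N.liftQ (c.coprod b) _ (N.mkQ (u, 0)) = _
      simp
    · intro u
      change N.liftQ (c.coprod b) _ (N.mkQ (0, u)) = _
      simp

lemma extP_of_splitP {U : ModA R} (hU : SplitP Pd U) : ExtP Pd U := by
  intro K M Z a b ha hab hZ r
  obtain ⟨E, a', m, h1, h2, h3, h4⟩ := pushout a r
  have hinj : Function.Injective a' := by
    rw [← LinearMap.ker_eq_bot, eq_bot_iff]
    intro u hu
    obtain ⟨k, hk, hk2⟩ := h3 u 0 (by rw [map_zero, add_zero]; exact hu)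
    have : a k = a 0 := by rw [map_zero]; exact neg_eq_zero.mp hk2.symm
    rw [ha this, map_zero] at hk
    exact hk
  obtain ⟨b', hb1, hb2⟩ := h4 Z b 0 (fun k => (hab _).mpr ⟨k, rfl⟩)
  obtain ⟨s, hs⟩ := hU E Z a' b' hinj (by
    intro x
    constructor
    · intro hx
      obtain ⟨u, y, rfl⟩ := h2 x
      rw [map_add, hb1, hb2, LinearMap.zero_apply, zero_add] at hx
      obtain ⟨k, rfl⟩ := (hab y).mp hx
      exact ⟨u + r k, by rw [map_add, h1]⟩
    · rintro ⟨y, rfl⟩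
      rw [hb1]; rfl) hZ
  refine ⟨s.comp m, ?_⟩
  ext k
  simp only [LinearMap.comp_apply, h1]
  exact LinearMap.congr_fun hs (r k)

lemma extP_of_tt {Y : ModA R} (hY : TT Pd Y) : ExtP Pd Y := extP_of_splitP (splitP_of_tt hY)

lemma irred_ne_zero {X Y : ModA R} (hX : X.IsIndec) (hY : Y.IsIndec) {f : X.M →ₗ[R] Y.M}
    (hf : IsIrred f) : f ≠ 0 := by
  rintro rfl
  rcases hf.2.2 (of R PUnit) 0 0 (by simp) with ⟨r, hr⟩ | ⟨r, hr⟩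
  · exact (ne_zero_of_comp_id hX hr).1 rfl
  · exact (ne_zero_of_comp_id hY hr).2 rfl

variable (Pd)

/-- The modules on the left section. -/
def Sig (U : ModA R) : Prop := U.IsIndec ∧ Pd U ∧ ExtP Pd U

/-- Embedded into a torsion module. -/
def Emb (U : ModA R) : Prop :=
  ∃ (W : ModA R) (i : U.M →ₗ[R] W.M), TT Pd W ∧ Function.Injective i

variable {Pd}

lemma sig_of_exit (hcl : ClosedPd Pd) {X Y : ModA R} (hX : X.IsIndec) (hPX : Pd X)
    (hY : Y.IsIndec) (hPY : ¬ Pd Y) {f : X.M →ₗ[R] Y.M} (hf : IsIrred f) : Sig Pd X := by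
  refine ⟨hX, hPX, extP_of_splitP ?_⟩
  intro E Z a b ha hab hZ
  have hTY := tt_of_indec hcl hY hPY
  obtain ⟨φ, hφ⟩ := extP_of_tt hTY X E Z a b ha hab hZ f
  rcases hf.2.2 E a φ hφ with h | ⟨s, hs⟩
  · exact h
  · exfalso
    have h0 : b.comp s = 0 := hom_tt_ff hTY hZ _
    obtain ⟨s', hs'⟩ := lift_inj a ha s (fun x => (hab _).mp (LinearMap.congr_fun h0 x))
    apply hf.2.1
    refine ⟨s', ?_⟩
    rw [← hφ, LinearMap.comp_assoc, hs', hs]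

lemma sig_step (hcl : ClosedPd Pd) {U Z : ModA R} (hU : Sig Pd U) (hE : Emb Pd U)
    (hZ : Z.IsIndec) (hPZ : Pd Z) {g : U.M →ₗ[R] Z.M} (hg : IsIrred g) :
    Sig Pd Z ∧ Emb Pd Z := by
  obtain ⟨W, ι, hW, hι⟩ := hE
  obtain ⟨hUi, hPU, hUE⟩ := hU
  obtain ⟨W', z, w, h1, h2, h3, -⟩ := pushout ι g
  have hFZ := ff_of_indec hcl hZ hPZ
  have hzinj : Function.Injective z := by
    rw [← LinearMap.ker_eq_bot, eq_bot_iff]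
    intro u hu
    obtain ⟨k, hk, hk2⟩ := h3 u 0 (by rw [map_zero, add_zero]; exact hu)
    have : ι k = ι 0 := by rw [map_zero]; exact neg_eq_zero.mp hk2.symm
    rw [hι this, map_zero] at hk
    exact hk
  have hTW : TT Pd W' := by
    intro V hV ψ hψ hPV
    have hw0 : ψ.comp w = 0 := by
      by_contra hne
      exact hW V hV _ hne hPV
    have hFV := ff_of_indec hcl hV hPV
    set p := ψ.comp z with hp
    have hpg : ∀ u, p (g u) = 0 := by
      intro u
      rw [hp, LinearMap.comp_apply, ← h1]
      exact LinearMap.congr_fun hw0 (ι u)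
    have hpne : p ≠ 0 := by
      intro h0
      apply hψ
      ext x
      obtain ⟨u, y, rfl⟩ := h2 x
      rw [map_add]
      have e1 := LinearMap.congr_fun h0 u
      have e2 := LinearMap.congr_fun hw0 y
      simp only [hp, LinearMap.comp_apply, LinearMap.zero_apply] at e1 e2
      rw [e1, e2, add_zero, LinearMap.zero_apply]
    rcases hg.2.2 (of R (LinearMap.ker p)) (g.codRestrict _ hpg) (LinearMap.ker p).subtype
      (by ext; rfl) with ⟨r, hr⟩ | ⟨s, hs⟩
    · obtain ⟨r', hr'⟩ := hUE (of R (LinearMap.ker p)) Z V (LinearMap.ker p).subtype p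
        (Submodule.subtype_injective _) (by
          intro x
          constructor
          · intro hx; exact ⟨⟨x, hx⟩, rfl⟩
          · rintro ⟨y, rfl⟩; exact y.2) hFV r
      apply hg.1
      refine ⟨r', ?_⟩
      ext u
      have e1 := LinearMap.congr_fun hr' (g.codRestrict _ hpg u)
      have e2 := LinearMap.congr_fun hr u
      exact e1.trans e2
    · apply hpne
      ext x
      have := LinearMap.congr_fun hs x
      have h5 : p ((LinearMap.ker p).subtype (s x)) = 0 := (s x).2
      have h6 : (LinearMap.ker p).subtype (s x) = x := this
      rw [h6] at h5
      exact h5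
  refine ⟨⟨hZ, hPZ, extP_of_splitP ?_⟩, W', z, hTW, hzinj⟩
  intro E V a b ha hab hV
  obtain ⟨φ, hφ⟩ := extP_of_tt hTW Z E V a b ha hab hV z
  have hFE : FF Pd E := by
    intro T hT t ht
    by_cases hbt : b.comp t = 0
    · obtain ⟨t', ht'⟩ := lift_inj a ha t (fun x => (hab _).mp (LinearMap.congr_fun hbt x))
      refine hFZ T hT t' ?_
      rintro rfl
      exact ht (by rw [← ht', LinearMap.comp_zero])
    · exact hV T hT _ hbt
  let q : (E.M × (Z.M × W.M)) →ₗ[R] W'.M :=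
    φ.comp (LinearMap.fst R _ _) - (z.coprod w).comp (LinearMap.snd R _ _)
  have hq : ∀ e y x, q (e, (y, x)) = φ e - (z y + w x) := fun e y x => by simp [q]
  let M := of R (LinearMap.ker q)
  let bM : M.M →ₗ[R] E.M := (LinearMap.fst R _ _).comp (LinearMap.ker q).subtype
  have haM : ∀ u : U.M, q (0, (g u, - ι u)) = 0 := by
    intro u; rw [hq, map_zero, map_neg, h1]; simp
  let aM : U.M →ₗ[R] M.M := LinearMap.codRestrict (LinearMap.ker q)
    ((0 : U.M →ₗ[R] E.M).prod (g.prod (-ι))) haM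
  have haMi : Function.Injective aM := by
    intro u v huv
    have := congrArg (fun m : M.M => m.1.2.2) huv
    have h5 : - ι u = - ι v := this
    exact hι (neg_injective h5)
  have hexM : ∀ x, bM x = 0 ↔ ∃ y, aM y = x := by
    rintro ⟨⟨e, y, x⟩, hx⟩
    have hx' := hx
    rw [LinearMap.mem_ker, hq] at hx'
    constructor
    · intro h0
      have h0' : e = 0 := h0
      subst h0'
      rw [map_zero, zero_sub, neg_eq_zero] at hx'
      obtain ⟨k, hk1, hk2⟩ := h3 y x hx'
      refine ⟨k, Subtype.ext ?_⟩
      change ((0 : E.M), (g k, - ι k)) = (0, y, x)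
      rw [hk1, hk2]
    · rintro ⟨u, hu⟩
      rw [← hu]
      rfl
  have hbMs : Function.Surjective bM := by
    intro e
    obtain ⟨y, x, hyx⟩ := h2 (φ e)
    exact ⟨⟨(e, (y, x)), by rw [LinearMap.mem_ker, hq, hyx, sub_self]⟩, rfl⟩
  obtain ⟨ρ, hρ⟩ := hUE U M E aM bM haMi hexM hFE LinearMap.id
  obtain ⟨σ, hσ⟩ := desc_surj bM hbMs (LinearMap.id - aM.comp ρ) (by
    intro m hm
    obtain ⟨u, rfl⟩ := (hexM m).mp hm
    have := LinearMap.congr_fun hρ u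
    simp only [LinearMap.comp_apply, LinearMap.id_apply] at this
    simp [this])
  have hbσ : ∀ e, bM (σ e) = e := by
    intro e
    obtain ⟨m, rfl⟩ := hbMs e
    have h5 := LinearMap.congr_fun hσ m
    simp only [LinearMap.comp_apply, LinearMap.sub_apply, LinearMap.id_apply] at h5
    rw [h5, map_sub, (hexM _).mpr ⟨ρ m, rfl⟩, sub_zero]
  let α : E.M →ₗ[R] Z.M := ((LinearMap.fst R _ _).comp (LinearMap.snd R _ _)).comp
    ((LinearMap.ker q).subtype.comp σ)
  let β : E.M →ₗ[R] W.M := ((LinearMap.snd R _ _).comp (LinearMap.snd R _ _)).comp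
    ((LinearMap.ker q).subtype.comp σ)
  have hαβ : ∀ e, φ e = z (α e) + w (β e) := by
    intro e
    have h5 : q ((bM (σ e)), (α e, β e)) = 0 := (σ e).2
    rw [hq, hbσ] at h5
    exact sub_eq_zero.mp h5
  have hk : ∀ y, ∃ k, α (a y) - y = g k ∧ β (a y) = - ι k := by
    intro y
    apply h3
    have h5 := hαβ (a y)
    have h6 : φ (a y) = z y := LinearMap.congr_fun hφ y
    rw [h6] at h5
    rw [map_sub, h5]
    abel
  obtain ⟨u, hu⟩ := lift_inj ι hι (-(β.comp a)) (fun y => by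
    obtain ⟨k, -, hk⟩ := hk y
    exact ⟨k, by simp [hk]⟩)
  have hsum : (α.comp a) + (-(g.comp u)) = LinearMap.id := by
    ext y
    obtain ⟨k, hk1, hk2⟩ := hk y
    have h5 : ι (u y) = ι k := by
      have := LinearMap.congr_fun hu y
      simp only [LinearMap.comp_apply, LinearMap.neg_apply, hk2, neg_neg] at this
      exact this
    have h6 := hι h5
    simp only [LinearMap.add_apply, LinearMap.neg_apply, LinearMap.comp_apply, LinearMap.id_apply]
    rw [h6, ← hk1]
    abel
  rcases bij_of_sum hZ _ _ hsum with hb | hb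
  · exact splitMono_of_bij_comp hb
  · exfalso
    apply hg.2.1
    refine splitEpi_of_bij_comp (a := -u) (b := g) ?_
    rw [LinearMap.comp_neg]
    exact hb

end Torsion

end SA


namespace SA

section ClaimA

variable {R : Type u} [Ring R]

/-- Composites of irreducible maps between section modules. -/
inductive SP (Pd : ModA R → Prop) (X : ModA R) : (Y : ModA R) → (X.M →ₗ[R] Y.M) → Prop
  | nil : SP Pd X X LinearMap.id
  | cons {Y Z : ModA R} {c : X.M →ₗ[R] Y.M} (h : SP Pd X Y c) (g : Y.M →ₗ[R] Z.M)
      (hg : IsIrred g) (hZ : Sig Pd Z) : SP Pd X Z (g.comp c)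

/-- No section module is a direct summand. -/
def NoSig (Pd : ModA R → Prop) (B : ModA R) : Prop :=
  ∀ U : ModA R, Sig Pd U → ∀ t : U.M →ₗ[R] B.M, ¬ SplitMonoMap t

lemma sp_sig {Pd : ModA R → Prop} {X Y : ModA R} {c : X.M →ₗ[R] Y.M} (hX : Sig Pd X)
    (h : SP Pd X Y c) : Sig Pd Y := by
  cases h with
  | nil => exact hX
  | cons h g hg hZ => exact hZ

lemma sp_trans {Pd : ModA R → Prop} {X Y Z : ModA R} {c : X.M →ₗ[R] Y.M} {d : Y.M →ₗ[R] Z.M}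
    (h1 : SP Pd X Y c) (h2 : SP Pd Y Z d) : SP Pd X Z (d.comp c) := by
  induction h2 with
  | nil => exact h1
  | cons h g hg hZ ih => exact SP.cons ih g hg hZ

lemma sp_ne {Pd : ModA R → Prop} (hcl : ClosedPd Pd) {X Y : ModA R} {c : X.M →ₗ[R] Y.M}
    (hX : Sig Pd X) (h : SP Pd X Y c) : ∀ (B : ModA R), NoSig Pd B →
      ∀ (v : B.M →ₗ[R] Y.M) (h : X.M →ₗ[R] B.M), c + v.comp h ≠ 0 := by
  induction h with
  | nil =>
    intro B hB v h h0
    refine hB X hX h ⟨-v, ?_⟩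
    rw [LinearMap.neg_comp]
    exact neg_eq_of_add_eq_zero_left h0
  | @cons Y Z c hc g hg hZ ih =>
    intro B hB v h h0
    have hY := sp_sig hX hc
    let q : (Y.M × B.M) →ₗ[R] Z.M := g.coprod v
    have hq : ∀ y b, q (y, b) = g y + v b := fun y b => by simp [q]
    let K := of R (LinearMap.ker q)
    let aK : K.M →ₗ[R] Y.M := (LinearMap.fst R _ _).comp (LinearMap.ker q).subtype
    let bK : K.M →ₗ[R] B.M := (LinearMap.snd R _ _).comp (LinearMap.ker q).subtype
    have hab : ∀ k, g (aK k) + v (bK k) = 0 := by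
      intro k
      rw [← hq]
      exact k.2
    let s : X.M →ₗ[R] K.M := LinearMap.codRestrict (LinearMap.ker q) (c.prod h) (fun x => by
      have := LinearMap.congr_fun h0 x
      rw [LinearMap.mem_ker]
      exact (hq _ _).trans this)
    refine ih K ?_ (-aK) s ?_
    · rintro U hU t ⟨r, hr⟩
      obtain ⟨r', hr'⟩ := hU.2.2 K (of R (Y.M × B.M)) Z (LinearMap.ker q).subtype q
        (Submodule.subtype_injective _) (by
          intro x
          constructor
          · intro hx; exact ⟨⟨x, hx⟩, rfl⟩
          · rintro ⟨y, rfl⟩; exact y.2) (ff_of_indec hcl hZ.1 hZ.2.1) r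
      have hsum : ((r'.comp (LinearMap.inl R Y.M B.M)).comp (aK.comp t) : U.M →ₗ[R] U.M) +
          ((r'.comp (LinearMap.inr R Y.M B.M)).comp (bK.comp t)) = LinearMap.id := by
        ext x
        have e1 := LinearMap.congr_fun hr' (t x)
        have e2 := LinearMap.congr_fun hr x
        refine Eq.trans ?_ (e1.trans e2)
        change r' (aK (t x), 0) + r' (0, bK (t x)) = r' (aK (t x), bK (t x))
        rw [← map_add]
        simp
      rcases bij_of_sum hU.1 _ _ hsum with hb | hb
      · have h1 := bij_of_splitMono hU.1 hY.1 (splitMono_of_bij_comp hb)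
        obtain ⟨τ, hτ⟩ := splitEpi_of_bij h1
        have hgv : v.comp (-(bK.comp (t.comp τ))) = g := by
          ext y
          have e1 := hab (t (τ y))
          have e2 : aK (t (τ y)) = y := LinearMap.congr_fun hτ y
          rw [e2] at e1
          simp only [LinearMap.comp_apply, LinearMap.neg_apply, map_neg]
          exact (eq_neg_of_add_eq_zero_left e1).symm
        rcases hg.2.2 B _ _ hgv with h2 | ⟨s', hs'⟩
        · exact hB Y hY _ h2
        · exact hB Z hZ s' ⟨v, hs'⟩
      · exact hB U hU _ (splitMono_of_bij_comp hb)
    · ext x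
      change c x + -(c x) = 0
      simp

lemma noSig_zero (Pd : ModA R → Prop) : NoSig Pd (of R PUnit) := by
  rintro U hU t ⟨r, hr⟩
  refine (ne_zero_of_comp_id hU.1 hr).1 ?_
  ext

lemma sp_ne_zero {Pd : ModA R → Prop} (hcl : ClosedPd Pd) {X Y : ModA R} {c : X.M →ₗ[R] Y.M}
    (hX : Sig Pd X) (h : SP Pd X Y c) : c ≠ 0 := by
  have := sp_ne hcl hX h (of R PUnit) (noSig_zero Pd) 0 0
  simpa using this

/-- Irreducible step. -/
def IrrStep (X Y : IndecModA R) : Prop := ∃ f : X.1.M →ₗ[R] Y.1.M, IsIrred f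

/-- Nonzero hom step. -/
def HStep (X Y : IndecModA R) : Prop := ∃ f : X.1.M →ₗ[R] Y.1.M, f ≠ 0

/-- Path of nonzero homs. -/
abbrev HP (X Y : IndecModA R) : Prop := Relation.ReflTransGen HStep X Y

lemma hstep_of_irr {X Y : IndecModA R} (h : IrrStep X Y) : HStep X Y := by
  obtain ⟨f, hf⟩ := h
  exact ⟨f, irred_ne_zero X.2 Y.2 hf⟩

lemma sp_along {Pd : ModA R → Prop} (hcl : ClosedPd Pd) {T : IndecModA R}
    (hPd : ∀ Y, Relation.ReflTransGen IrrStep Y T → Pd Y.1) (X0 : ModA R) (Y : IndecModA R)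
    (hYT : Relation.ReflTransGen IrrStep Y T) : ∀ (c : X0.M →ₗ[R] Y.1.M), SP Pd X0 Y.1 c →
      Sig Pd Y.1 → Emb Pd Y.1 →
      ∃ d : Y.1.M →ₗ[R] T.1.M, SP Pd X0 T.1 (d.comp c) := by
  induction hYT using Relation.ReflTransGen.head_induction_on with
  | refl => intro c hc _ _; exact ⟨LinearMap.id, hc⟩
  | @head Y Z h1 h2 ih =>
    intro c hc hS hE
    obtain ⟨g, hg⟩ := h1
    obtain ⟨hS', hE'⟩ := sig_step hcl hS hE Z.2 (hPd Z h2) hg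
    obtain ⟨d, hd⟩ := ih (g.comp c) (SP.cons hc g hg hS') hS' hE'
    exact ⟨d.comp g, hd⟩

lemma claimA {X Y : IndecModA R} {f : X.1.M →ₗ[R] Y.1.M} (hf : IsIrred f)
    (hinj : Function.Injective f) (hcyc : Relation.TransGen IrrStep X X) : HP Y X := by
  by_contra hcon
  let Pd : ModA R → Prop := fun T => ∃ hT : T.IsIndec, HP ⟨T, hT⟩ X
  have hcl : ClosedPd Pd := by
    rintro S T hS hT g hg ⟨_, h⟩
    exact ⟨hS, Relation.ReflTransGen.head (b := (⟨T, hT⟩ : IndecModA R)) ⟨g, hg⟩ h⟩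
  have hPX : Pd X.1 := ⟨X.2, Relation.ReflTransGen.refl⟩
  have hPY : ¬ Pd Y.1 := by
    rintro ⟨_, h⟩
    exact hcon h
  have hS := sig_of_exit hcl X.2 hPX Y.2 hPY hf
  have hE : Emb Pd X.1 := ⟨Y.1, f, tt_of_indec hcl Y.2 hPY, hinj⟩
  have hPd : ∀ Z, Relation.ReflTransGen IrrStep Z X → Pd Z.1 := by
    intro Z hZ
    exact ⟨Z.2, Relation.ReflTransGen.mono (fun a b h => hstep_of_irr h) _ _ hZ⟩
  obtain ⟨Z, ⟨g, hg⟩, hZX⟩ := Relation.TransGen.head'_iff.mp hcyc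
  obtain ⟨hS', hE'⟩ := sig_step hcl hS hE Z.2 (hPd Z hZX) hg
  obtain ⟨d, hd⟩ := sp_along hcl hPd X.1 Z hZX g (SP.cons SP.nil g hg hS') hS' hE'
  have hpow : ∀ n : ℕ, SP Pd X.1 X.1 ((d.comp g : Module.End R X.1.M) ^ n) := by
    intro n
    induction n with
    | zero => exact SP.nil
    | succ n ih =>
      have := sp_trans ih hd
      rw [pow_succ']
      exact this
  rcases bij_or_nilp X.2 (d.comp g) with hb | ⟨n, hn⟩
  · exact hg.1 (splitMono_of_bij_comp hb)
  · exact sp_ne_zero hcl hS (hpow n) hn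

end ClaimA

end SA


namespace SA

section Dual

variable {R : Type u} [Ring R]

variable (Pd : ModA R → Prop)

/-- Splitting of extensions of torsion modules. -/
def CoSplitP (U : ModA R) : Prop := ∀ (G Z : ModA R) (a : Z.M →ₗ[R] G.M) (b : G.M →ₗ[R] U.M),
  Function.Surjective b → (∀ x, b x = 0 ↔ ∃ y, a y = x) → TT Pd Z → SplitEpiMap b

/-- Lifting of maps along torsion kernels. -/
def CoExtP (U : ModA R) : Prop := ∀ (Z M N : ModA R) (a : Z.M →ₗ[R] M.M) (b : M.M →ₗ[R] N.M),
  Function.Surjective b → (∀ x, b x = 0 ↔ ∃ y, a y = x) → TT Pd Z →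
    ∀ r : U.M →ₗ[R] N.M, ∃ rr : U.M →ₗ[R] M.M, b.comp rr = r

/-- The modules on the right section. -/
def CoSig (U : ModA R) : Prop := U.IsIndec ∧ ¬ Pd U ∧ CoExtP Pd U

/-- Covered by a torsion-free module. -/
def CoEmb (U : ModA R) : Prop :=
  ∃ (W : ModA R) (p : W.M →ₗ[R] U.M), FF Pd W ∧ Function.Surjective p

variable {Pd}

lemma cosplitP_of_ff {Y : ModA R} (hY : FF Pd Y) : CoSplitP Pd Y := by
  intro G Z a b hb hab hZ
  obtain ⟨e, he1, he2⟩ := torsion_idem (Pd := Pd) G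
  obtain ⟨s, hs⟩ := desc_surj b hb (LinearMap.id - e) (fun x hx => by
    obtain ⟨y, rfl⟩ := (hab x).mp hx
    have := LinearMap.congr_fun (he1 Z hZ a) y
    simp only [LinearMap.comp_apply] at this
    simp [this])
  refine ⟨s, ?_⟩
  ext y
  obtain ⟨x, rfl⟩ := hb y
  have h1 := LinearMap.congr_fun hs x
  have h2 := LinearMap.congr_fun (he2 Y hY b) x
  simp only [LinearMap.comp_apply, LinearMap.sub_apply, LinearMap.id_apply,
    LinearMap.zero_apply] at h1 h2 ⊢
  rw [h1, map_sub, h2, sub_zero]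

lemma pullback {M N U : ModA R} (b : M.M →ₗ[R] N.M) (r : U.M →ₗ[R] N.M) :
    ∃ (E : ModA R) (b' : E.M →ₗ[R] U.M) (m : E.M →ₗ[R] M.M),
      (∀ x, b (m x) = r (b' x)) ∧ (∀ x, b' x = 0 → m x = 0 → x = 0) ∧
      (∀ u y, r u = b y → ∃ x, b' x = u ∧ m x = y) ∧
      (∀ (Z : ModA R) (c : Z.M →ₗ[R] M.M) (d : Z.M →ₗ[R] U.M), (∀ z, b (c z) = r (d z)) →
        ∃ a' : Z.M →ₗ[R] E.M, (∀ z, b' (a' z) = d z) ∧ (∀ z, m (a' z) = c z)) := by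
  let q : (U.M × M.M) →ₗ[R] N.M :=
    r.comp (LinearMap.fst R _ _) - b.comp (LinearMap.snd R _ _)
  have hq : ∀ u y, q (u, y) = r u - b y := fun u y => by simp [q]
  refine ⟨of R (LinearMap.ker q), (LinearMap.fst R _ _).comp (LinearMap.ker q).subtype,
    (LinearMap.snd R _ _).comp (LinearMap.ker q).subtype, ?_, ?_, ?_, ?_⟩
  · rintro ⟨⟨u, y⟩, hx⟩
    rw [LinearMap.mem_ker, hq, sub_eq_zero] at hx
    exact hx.symm
  · rintro ⟨⟨u, y⟩, hx⟩ h1 h2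
    have h1' : u = 0 := h1
    have h2' : y = 0 := h2
    subst h1' h2'
    rfl
  · intro u y h
    exact ⟨⟨(u, y), by rw [LinearMap.mem_ker, hq, h, sub_self]⟩, rfl, rfl⟩
  · intro Z c d hcd
    exact ⟨LinearMap.codRestrict (LinearMap.ker q) (d.prod c) (fun z => by
      rw [LinearMap.mem_ker]
      exact (hq _ _).trans (by rw [hcd, sub_self])), fun z => rfl, fun z => rfl⟩

lemma coextP_of_cosplitP {U : ModA R} (hU : CoSplitP Pd U) : CoExtP Pd U := by
  intro Z M N a b hb hab hZ r
  obtain ⟨E, b', m, h1, h2, h3, h4⟩ := pullback b r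
  have hsurj : Function.Surjective b' := by
    intro u
    obtain ⟨y, hy⟩ := hb (r u)
    obtain ⟨x, hx, -⟩ := h3 u y hy.symm
    exact ⟨x, hx⟩
  obtain ⟨a', ha1, ha2⟩ := h4 Z a 0 (fun z => by
    rw [LinearMap.zero_apply, map_zero]; exact (hab _).mpr ⟨z, rfl⟩)
  obtain ⟨s, hs⟩ := hU E Z a' b' hsurj (by
    intro x
    constructor
    · intro hx
      have h5 : b (m x) = 0 := by rw [h1, hx, map_zero]
      obtain ⟨z, hz⟩ := (hab _).mp h5
      refine ⟨z, ?_⟩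
      rw [← sub_eq_zero]
      apply h2
      · rw [map_sub, ha1, hx]; simp
      · rw [map_sub, ha2, hz, sub_self]
    · rintro ⟨y, rfl⟩
      rw [ha1]; rfl) hZ
  refine ⟨m.comp s, ?_⟩
  ext u
  simp only [LinearMap.comp_apply, h1]
  exact congrArg r (LinearMap.congr_fun hs u)

lemma coextP_of_ff {Y : ModA R} (hY : FF Pd Y) : CoExtP Pd Y :=
  coextP_of_cosplitP (cosplitP_of_ff hY)

lemma cosig_of_exit (hcl : ClosedPd Pd) {X Y : ModA R} (hX : X.IsIndec) (hPX : Pd X)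
    (hY : Y.IsIndec) (hPY : ¬ Pd Y) {f : X.M →ₗ[R] Y.M} (hf : IsIrred f) : CoSig Pd Y := by
  refine ⟨hY, hPY, coextP_of_cosplitP ?_⟩
  intro E Z a b hb hab hZ
  have hFX := ff_of_indec hcl hX hPX
  obtain ⟨φ, hφ⟩ := coextP_of_ff hFX Z E Y a b hb hab hZ f
  rcases hf.2.2 E φ b hφ with ⟨s, hs⟩ | h
  · exfalso
    have h0 : s.comp a = 0 := hom_tt_ff hZ hFX _
    obtain ⟨s', hs'⟩ := desc_surj b hb s (fun x hx => by
      obtain ⟨y, rfl⟩ := (hab x).mp hx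
      exact LinearMap.congr_fun h0 y)
    apply hf.1
    refine ⟨s', ?_⟩
    rw [← hφ, ← LinearMap.comp_assoc, hs', hs]
  · exact h

lemma cosig_step (hcl : ClosedPd Pd) {U Z : ModA R} (hU : CoSig Pd U) (hE : CoEmb Pd U)
    (hZ : Z.IsIndec) (hPZ : ¬ Pd Z) {g : Z.M →ₗ[R] U.M} (hg : IsIrred g) :
    CoSig Pd Z ∧ CoEmb Pd Z := by
  obtain ⟨W, p, hW, hp⟩ := hE
  obtain ⟨hUi, hPU, hUE⟩ := hU
  obtain ⟨W', ζ, ω, h1, h2, h3, -⟩ := pullback p g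
  have hTZ := tt_of_indec hcl hZ hPZ
  have hζs : Function.Surjective ζ := by
    intro u
    obtain ⟨y, hy⟩ := hp (g u)
    obtain ⟨x, hx, -⟩ := h3 u y hy.symm
    exact ⟨x, hx⟩
  have hFW : FF Pd W' := by
    intro V hV ψ hψ
    by_contra hPV
    have hw0 : ω.comp ψ = 0 := by
      by_contra hne
      exact hPV (hW V hV _ hne)
    have hTV := tt_of_indec hcl hV hPV
    set i := ζ.comp ψ with hi
    have hgi : ∀ v, g (i v) = 0 := by
      intro v
      have := LinearMap.congr_fun hw0 v
      simp only [LinearMap.comp_apply, LinearMap.zero_apply] at this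
      rw [hi, LinearMap.comp_apply, ← h1, this, map_zero]
    have hine : i ≠ 0 := by
      intro h0
      apply hψ
      ext v
      exact h2 _ (LinearMap.congr_fun h0 v) (LinearMap.congr_fun hw0 v)
    let N := LinearMap.range i
    have hNg : N ≤ LinearMap.ker g := by
      rintro _ ⟨v, rfl⟩
      exact hgi v
    rcases hg.2.2 (of R (Z.M ⧸ N)) N.mkQ (N.liftQ g hNg) (by ext; rfl) with ⟨r, hr⟩ | ⟨s, hs⟩
    · apply hine
      ext v
      have e1 := LinearMap.congr_fun hr (i v)
      have e2 : N.mkQ (i v) = 0 := (Submodule.Quotient.mk_eq_zero N).mpr ⟨v, rfl⟩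
      have e3 : r (N.mkQ (i v)) = i v := e1
      rw [e2] at e3
      rw [← e3]
      simp
    · obtain ⟨s', hs'⟩ := hUE V Z (of R (Z.M ⧸ N)) i N.mkQ N.mkQ_surjective
        (fun x => Submodule.Quotient.mk_eq_zero N) hTV s
      apply hg.2.1
      refine ⟨s', ?_⟩
      ext u
      have e1 := LinearMap.congr_fun hs' u
      have e2 := LinearMap.congr_fun hs u
      exact (congrArg (N.liftQ g hNg) e1).trans e2
  refine ⟨⟨hZ, hPZ, coextP_of_cosplitP ?_⟩, W', ζ, hFW, hζs⟩
  intro E V a b hb hab hV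
  obtain ⟨φ, hφ⟩ := coextP_of_ff hFW V E Z a b hb hab hV ζ
  have hTE : TT Pd E := by
    intro T hT t ht
    by_cases hbt : t.comp a = 0
    · obtain ⟨t', ht'⟩ := desc_surj b hb t (fun x hx => by
        obtain ⟨y, rfl⟩ := (hab x).mp hx
        exact LinearMap.congr_fun hbt y)
      refine hTZ T hT t' ?_
      rintro rfl
      exact ht (by rw [← ht', LinearMap.zero_comp])
    · exact hV T hT _ hbt
  obtain ⟨M, aM, mM, k1, k2, k3, k4⟩ :=
    pushout (K := W') (M := of R (Z.M × W.M)) (U := E) (ζ.prod ω) φ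
  obtain ⟨bM, hbM1, hbM2⟩ := k4 U (g.comp (LinearMap.fst R _ _) - p.comp (LinearMap.snd R _ _)) 0
    (by
      intro x
      change g (ζ x) - p (ω x) = 0
      rw [h1, sub_self])
  have hbM2' : ∀ y x, bM (mM (y, x)) = g y - p x := fun y x => hbM2 (y, x)
  have haMi : Function.Injective aM := by
    rw [← LinearMap.ker_eq_bot, eq_bot_iff]
    intro u hu
    obtain ⟨k, hk, hk2⟩ := k3 u 0 (by rw [map_zero, add_zero]; exact hu)
    have h5 : (ζ k, ω k) = ((0 : Z.M), (0 : W.M)) := neg_eq_zero.mp hk2.symm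
    have h6 : k = 0 := h2 k (congrArg Prod.fst h5) (congrArg Prod.snd h5)
    rw [h6, map_zero] at hk
    exact hk
  have hexM : ∀ x, bM x = 0 ↔ ∃ y, aM y = x := by
    intro x
    constructor
    · intro hx
      obtain ⟨e, ⟨y, w⟩, rfl⟩ := k2 x
      rw [map_add, hbM1, hbM2', LinearMap.zero_apply, zero_add, sub_eq_zero] at hx
      obtain ⟨t, rfl, rfl⟩ := h3 y w hx
      have h5 : mM (ζ t, ω t) = aM (φ t) := k1 t
      exact ⟨e + φ t, by rw [map_add, h5]⟩
    · rintro ⟨y, rfl⟩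
      rw [hbM1]; rfl
  have hbMs : Function.Surjective bM := by
    intro u
    obtain ⟨w, hw⟩ := hp u
    exact ⟨mM (0, -w), by rw [hbM2']; simp [hw]⟩
  obtain ⟨ρ, hρ⟩ := hUE E M U aM bM hbMs hexM hTE LinearMap.id
  have hρ' : ∀ u, bM (ρ u) = u := fun u => LinearMap.congr_fun hρ u
  obtain ⟨σ, hσ⟩ := lift_inj aM haMi (LinearMap.id - ρ.comp bM) (by
    intro m
    refine (hexM _).mp ?_
    simp [hρ'])
  have hσa : ∀ e, σ (aM e) = e := by
    intro e
    apply haMi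
    have h5 := LinearMap.congr_fun hσ (aM e)
    simp only [LinearMap.comp_apply, LinearMap.sub_apply, LinearMap.id_apply] at h5
    rw [h5, (hexM _).mpr ⟨e, rfl⟩, map_zero, sub_zero]
  let α : Z.M →ₗ[R] E.M := (σ.comp mM).comp (LinearMap.inl R Z.M W.M)
  let β : W.M →ₗ[R] E.M := (σ.comp mM).comp (LinearMap.inr R Z.M W.M)
  have hαβ : ∀ t, φ t = α (ζ t) + β (ω t) := by
    intro t
    have h5 : mM (ζ t, ω t) = aM (φ t) := k1 t
    have h6 : φ t = σ (mM (ζ t, ω t)) := by rw [h5, hσa]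
    rw [h6]
    change _ = σ (mM (ζ t, 0)) + σ (mM (0, ω t))
    rw [← map_add, ← map_add]
    simp
  have hk : ∀ t, b (α (ζ t)) - ζ t = - b (β (ω t)) := by
    intro t
    have h6 : b (φ t) = ζ t := LinearMap.congr_fun hφ t
    rw [hαβ, map_add] at h6
    exact sub_eq_of_eq_add (eq_neg_add_of_add_eq ((add_comm _ _).trans h6))
  obtain ⟨u, hu⟩ := desc_surj p hp (-(b.comp β)) (fun x hx => by
    obtain ⟨t, ht1, ht2⟩ := h3 0 x (by rw [map_zero, hx])
    have h5 := hk t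
    rw [ht1, ht2] at h5
    simpa using h5.symm)
  have hsum : (b.comp α) + (-(u.comp g)) = LinearMap.id := by
    ext y
    obtain ⟨x, hx⟩ := hp (g y)
    obtain ⟨t, ht1, ht2⟩ := h3 y x hx.symm
    have h5 := hk t
    rw [ht1, ht2] at h5
    have h6 := LinearMap.congr_fun hu x
    simp only [LinearMap.comp_apply, LinearMap.neg_apply] at h6
    rw [hx, ← h5] at h6
    simp only [LinearMap.add_apply, LinearMap.neg_apply, LinearMap.comp_apply, LinearMap.id_apply]
    rw [h6]
    abel
  rcases bij_of_sum hZ _ _ hsum with hb | hb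
  · exact splitEpi_of_bij_comp hb
  · exfalso
    apply hg.1
    refine splitMono_of_bij_comp (a := g) (b := -u) ?_
    rw [LinearMap.neg_comp]
    exact hb

/-- Composites of irreducible maps between right section modules. -/
inductive CoSP (Pd : ModA R → Prop) (Y : ModA R) : (X : ModA R) → (X.M →ₗ[R] Y.M) → Prop
  | nil : CoSP Pd Y Y LinearMap.id
  | cons {X Z : ModA R} {c : X.M →ₗ[R] Y.M} (h : CoSP Pd Y X c) (g : Z.M →ₗ[R] X.M)
      (hg : IsIrred g) (hZ : CoSig Pd Z) : CoSP Pd Y Z (c.comp g)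

/-- No right section module is a direct summand. -/
def NoCoSig (Pd : ModA R → Prop) (B : ModA R) : Prop :=
  ∀ U : ModA R, CoSig Pd U → ∀ t : B.M →ₗ[R] U.M, ¬ SplitEpiMap t

lemma cosp_cosig {X Y : ModA R} {c : X.M →ₗ[R] Y.M} (hY : CoSig Pd Y)
    (h : CoSP Pd Y X c) : CoSig Pd X := by
  cases h with
  | nil => exact hY
  | cons h g hg hZ => exact hZ

lemma cosp_trans {X Y Z : ModA R} {c : Y.M →ₗ[R] X.M} {d : Z.M →ₗ[R] Y.M}
    (h1 : CoSP Pd X Y c) (h2 : CoSP Pd Y Z d) : CoSP Pd X Z (c.comp d) := by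
  induction h2 with
  | nil => exact h1
  | cons h g hg hZ ih => exact CoSP.cons ih g hg hZ

lemma cosp_ne (hcl : ClosedPd Pd) {X Y : ModA R} {c : X.M →ₗ[R] Y.M}
    (hY : CoSig Pd Y) (h : CoSP Pd Y X c) : ∀ (B : ModA R), NoCoSig Pd B →
      ∀ (v : B.M →ₗ[R] Y.M) (h : X.M →ₗ[R] B.M), c + v.comp h ≠ 0 := by
  induction h with
  | nil =>
    intro B hB v h h0
    refine hB Y hY v ⟨-h, ?_⟩
    rw [LinearMap.comp_neg]
    exact neg_eq_of_add_eq_zero_left h0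
  | @cons X Z c hc g hg hZ ih =>
    intro B hB v h h0
    have hX := cosp_cosig hY hc
    let N : Submodule R (X.M × B.M) := LinearMap.range (g.prod h)
    let K := of R ((X.M × B.M) ⧸ N)
    let aK : X.M →ₗ[R] K.M := N.mkQ.comp (LinearMap.inl R _ _)
    let bK : B.M →ₗ[R] K.M := N.mkQ.comp (LinearMap.inr R _ _)
    have habs : ∀ x y, N.mkQ (x, y) = aK x + bK y := by
      intro x y
      change _ = N.mkQ (x, 0) + N.mkQ (0, y)
      rw [← map_add]; simp
    have hab : ∀ z, aK (g z) + bK (h z) = 0 := by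
      intro z
      rw [← habs]
      exact (Submodule.Quotient.mk_eq_zero N).mpr ⟨z, rfl⟩
    let s : K.M →ₗ[R] Y.M := N.liftQ (c.coprod v) (by
      rintro _ ⟨z, rfl⟩
      have := LinearMap.congr_fun h0 z
      simpa using this)
    refine ih K ?_ s (-aK) ?_
    · rintro U hU t ⟨r, hr⟩
      obtain ⟨r', hr'⟩ := hU.2.2 Z (of R (X.M × B.M)) K (g.prod h) N.mkQ
        N.mkQ_surjective (fun x => Submodule.Quotient.mk_eq_zero N)
        (tt_of_indec hcl hZ.1 hZ.2.1) r
      have hsum : ((t.comp aK).comp ((LinearMap.fst R X.M B.M).comp r') : U.M →ₗ[R] U.M) +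
          ((t.comp bK).comp ((LinearMap.snd R X.M B.M).comp r')) = LinearMap.id := by
        ext x
        have e1 := LinearMap.congr_fun hr' x
        have e2 := LinearMap.congr_fun hr x
        refine Eq.trans ?_ ((congrArg t e1).trans e2)
        change t (aK (r' x).1) + t (bK (r' x).2) = t (N.mkQ (r' x))
        rw [← map_add, ← habs]
      rcases bij_of_sum hU.1 _ _ hsum with hb | hb
      · have h1 := bij_of_splitEpi hX.1 hU.1 (splitEpi_of_bij_comp hb)
        obtain ⟨τ, hτ⟩ := splitMono_of_bij h1
        have hgv : (-((τ.comp t).comp bK)).comp h = g := by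
          ext z
          have e1 := congrArg (τ.comp t) (hab z)
          have e2 : τ (t (aK (g z))) = g z := LinearMap.congr_fun hτ (g z)
          rw [map_add, map_zero, LinearMap.comp_apply, e2] at e1
          simp only [LinearMap.comp_apply, LinearMap.neg_apply]
          exact (eq_neg_of_add_eq_zero_left e1).symm
        rcases hg.2.2 B _ _ hgv with ⟨s', hs'⟩ | h2
        · exact hB Z hZ s' ⟨h, hs'⟩
        · exact hB X hX _ h2
      · exact hB U hU _ (splitEpi_of_bij_comp hb)
    · ext x
      change c x + s (-(N.mkQ (x, 0))) = 0
      rw [map_neg]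
      change c x + -(c.coprod v (x, 0)) = 0
      simp

lemma noCoSig_zero (Pd : ModA R → Prop) : NoCoSig Pd (of R PUnit) := by
  rintro U hU t ⟨r, hr⟩
  refine (ne_zero_of_comp_id hU.1 hr).1 ?_
  ext

lemma cosp_ne_zero (hcl : ClosedPd Pd) {X Y : ModA R} {c : X.M →ₗ[R] Y.M}
    (hY : CoSig Pd Y) (h : CoSP Pd Y X c) : c ≠ 0 := by
  have := cosp_ne hcl hY h (of R PUnit) (noCoSig_zero Pd) 0 0
  simpa using this

lemma cosp_along (hcl : ClosedPd Pd) {T : IndecModA R}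
    (hPd : ∀ Y, Relation.ReflTransGen IrrStep T Y → ¬ Pd Y.1) (X0 : ModA R) (Y : IndecModA R)
    (hYT : Relation.ReflTransGen IrrStep T Y) : ∀ (c : Y.1.M →ₗ[R] X0.M), CoSP Pd X0 Y.1 c →
      CoSig Pd Y.1 → CoEmb Pd Y.1 →
      ∃ d : T.1.M →ₗ[R] Y.1.M, CoSP Pd X0 T.1 (c.comp d) := by
  induction hYT with
  | refl => intro c hc _ _; exact ⟨LinearMap.id, hc⟩
  | @tail Z Y h2 h1 ih =>
    intro c hc hS hE
    obtain ⟨g, hg⟩ := h1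
    obtain ⟨hS', hE'⟩ := cosig_step hcl hS hE Z.2 (hPd Z h2) hg
    obtain ⟨d, hd⟩ := ih (c.comp g) (CoSP.cons hc g hg hS') hS' hE'
    exact ⟨g.comp d, hd⟩

lemma claimA_dual {X Y : IndecModA R} {f : X.1.M →ₗ[R] Y.1.M} (hf : IsIrred f)
    (hsurj : Function.Surjective f) (hcyc : Relation.TransGen IrrStep Y Y) : HP Y X := by
  by_contra hcon
  let Pd : ModA R → Prop := fun T => ¬ ∃ hT : T.IsIndec, HP Y ⟨T, hT⟩
  have hcl : ClosedPd Pd := by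
    rintro S T hS hT g hg h ⟨_, h'⟩
    exact h ⟨hT, Relation.ReflTransGen.tail (b := (⟨S, hS⟩ : IndecModA R)) h' ⟨g, hg⟩⟩
  have hPY : ¬ Pd Y.1 := fun h => h ⟨Y.2, Relation.ReflTransGen.refl⟩
  have hPX : Pd X.1 := by
    rintro ⟨_, h⟩
    exact hcon h
  have hS := cosig_of_exit hcl X.2 hPX Y.2 hPY hf
  have hE : CoEmb Pd Y.1 := ⟨X.1, f, ff_of_indec hcl X.2 hPX, hsurj⟩
  have hPd : ∀ Z, Relation.ReflTransGen IrrStep Y Z → ¬ Pd Z.1 := by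
    intro Z hZ h
    exact h ⟨Z.2, Relation.ReflTransGen.mono (fun a b h => hstep_of_irr h) _ _ hZ⟩
  obtain ⟨Z, hZX, ⟨g, hg⟩⟩ := Relation.TransGen.tail'_iff.mp hcyc
  obtain ⟨hS', hE'⟩ := cosig_step hcl hS hE Z.2 (hPd Z hZX) hg
  obtain ⟨d, hd⟩ := cosp_along hcl hPd Y.1 Z hZX g (CoSP.cons CoSP.nil g hg hS') hS' hE'
  have hpow : ∀ n : ℕ, CoSP Pd Y.1 Y.1 ((g.comp d : Module.End R Y.1.M) ^ n) := by
    intro n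
    induction n with
    | zero => exact CoSP.nil
    | succ n ih =>
      have := cosp_trans ih hd
      rw [pow_succ]
      exact this
  rcases bij_or_nilp Y.2 (g.comp d) with hb | ⟨n, hn⟩
  · exact hg.2.1 (splitEpi_of_bij_comp hb)
  · exact cosp_ne_zero hcl hS (hpow n) hn

/-- An irreducible map is injective or surjective. -/
lemma irred_inj_or_surj {X Y : ModA R} {f : X.M →ₗ[R] Y.M} (hf : IsIrred f) :
    Function.Injective f ∨ Function.Surjective f := by
  rcases hf.2.2 (of R (LinearMap.range f)) f.rangeRestrict (LinearMap.range f).subtype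
    (by ext; rfl) with ⟨r, hr⟩ | ⟨s, hs⟩
  · left
    intro x y hxy
    have h1 : f.rangeRestrict x = f.rangeRestrict y := Subtype.ext hxy
    have h2 := congrArg r h1
    have e1 : r (f.rangeRestrict x) = x := LinearMap.congr_fun hr x
    have e2 : r (f.rangeRestrict y) = y := LinearMap.congr_fun hr y
    rw [← e1, h2, e2]
  · right
    intro y
    have h1 : ((s y : LinearMap.range f) : Y.M) = y := LinearMap.congr_fun hs y
    obtain ⟨x, hx⟩ := (s y).2
    exact ⟨x, hx.trans h1⟩

lemma hp_back {X Y : IndecModA R} (h : IrrStep X Y) (hX : Relation.TransGen IrrStep X X)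
    (hY : Relation.TransGen IrrStep Y Y) : HP Y X := by
  obtain ⟨f, hf⟩ := h
  rcases irred_inj_or_surj hf with h | h
  · exact claimA hf h hX
  · exact claimA_dual hf h hY

end Dual

end SA


namespace SA

section Gamma

variable {R : Type u} [Ring R]

open Relation

lemma exact_mk {X Y : IndecModA R} (h : ARVertex.mk X = ARVertex.mk Y) :
    Nonempty (X.1.M ≃ₗ[R] Y.1.M) :=
  Quotient.exact (s := isoSetoid R) h

lemma exists_mk (x : ARVertex R) : ∃ X : IndecModA R, ARVertex.mk X = x :=
  Quotient.exists_rep x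

lemma irred_conj {X Y X' Y' : ModA R} {f : X.M →ₗ[R] Y.M} (hf : IsIrred f)
    (e : X'.M ≃ₗ[R] X.M) (e' : Y.M ≃ₗ[R] Y'.M) :
    IsIrred (X := X') (Y := Y') (e'.toLinearMap.comp (f.comp e.toLinearMap)) := by
  refine ⟨?_, ?_, ?_⟩
  · rintro ⟨r, hr⟩
    apply hf.1
    refine ⟨e.toLinearMap.comp (r.comp e'.toLinearMap), ?_⟩
    ext x
    have := LinearMap.congr_fun hr (e.symm x)
    simp only [LinearMap.comp_apply, LinearEquiv.coe_coe, LinearEquiv.apply_symm_apply,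
      LinearMap.id_apply] at this ⊢
    rw [this, LinearEquiv.apply_symm_apply]
  · rintro ⟨r, hr⟩
    apply hf.2.1
    refine ⟨e.toLinearMap.comp (r.comp e'.toLinearMap), ?_⟩
    ext x
    have := LinearMap.congr_fun hr (e' x)
    exact e'.injective this
  · intro Z g h hgh
    have h1 : (e'.symm.toLinearMap.comp h).comp (g.comp e.symm.toLinearMap) = f := by
      ext x
      have := LinearMap.congr_fun hgh (e.symm x)
      simp only [LinearMap.comp_apply, LinearEquiv.coe_coe, LinearEquiv.apply_symm_apply] at this ⊢
      rw [this, LinearEquiv.symm_apply_apply]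
    rcases hf.2.2 Z _ _ h1 with ⟨r, hr⟩ | ⟨s, hs⟩
    · left
      refine ⟨e.symm.toLinearMap.comp r, ?_⟩
      ext x
      have := LinearMap.congr_fun hr (e x)
      simp only [LinearMap.comp_apply, LinearEquiv.coe_coe, LinearEquiv.symm_apply_apply,
        LinearMap.id_apply] at this ⊢
      rw [this, LinearEquiv.symm_apply_apply]
    · right
      refine ⟨s.comp e'.symm.toLinearMap, ?_⟩
      ext x
      have := LinearMap.congr_fun hs (e'.symm x)
      exact e'.symm.injective this

lemma irrStep_of_arrow {X Y : IndecModA R} (h : ARArrow (ARVertex.mk X) (ARVertex.mk Y)) :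
    IrrStep X Y := by
  obtain ⟨X', Y', f, hf, hX, hY⟩ := h
  obtain ⟨e⟩ := exact_mk hX.symm
  obtain ⟨e'⟩ := exact_mk hY
  exact ⟨_, irred_conj hf e e'⟩

lemma transGen_irr {x y : ARVertex R} (h : TransGen ARArrow x y) :
    ∀ X Y : IndecModA R, ARVertex.mk X = x → ARVertex.mk Y = y → TransGen IrrStep X Y := by
  induction h with
  | single h =>
    rintro X Y rfl rfl
    exact TransGen.single (irrStep_of_arrow h)
  | tail h1 h2 ih =>
    rename_i b c
    rintro X Y hX rfl
    obtain ⟨Z, rfl⟩ := exists_mk b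
    exact TransGen.tail (ih X Z hX rfl) (irrStep_of_arrow h2)

lemma hstep_of_mk_eq {X Y : IndecModA R} (h : ARVertex.mk X = ARVertex.mk Y) : HStep X Y := by
  obtain ⟨e⟩ := exact_mk h
  refine ⟨e.toLinearMap, ?_⟩
  have : (e.symm.toLinearMap).comp e.toLinearMap = LinearMap.id := by ext; simp
  exact (ne_zero_of_comp_id X.2 this).1

lemma hp_of_conn {x y : ARVertex R}
    (h : ReflTransGen (fun a b => a ∈ {x : ARVertex R | OnARCycle x} ∧
      b ∈ {x : ARVertex R | OnARCycle x} ∧ ARStep a b) x y) :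
    ∀ X Y : IndecModA R, ARVertex.mk X = x → ARVertex.mk Y = y → HP X Y := by
  induction h with
  | refl =>
    rintro X Y rfl h
    exact ReflTransGen.single (hstep_of_mk_eq h.symm)
  | tail h1 h2 ih =>
    rename_i b c
    rintro X Y hX rfl
    obtain ⟨Z, rfl⟩ := exists_mk b
    refine ReflTransGen.trans (ih X Z hX rfl) ?_
    obtain ⟨hb, hc, h⟩ := h2
    rcases h with h | h
    · exact ReflTransGen.single (hstep_of_irr (irrStep_of_arrow h))
    · exact hp_back (irrStep_of_arrow h) (transGen_irr hc _ _ rfl rfl)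
        (transGen_irr hb _ _ rfl rfl)

lemma gamma_hp {Γ : Set (ARVertex R)} (hΓ : IsCyclicComponent Γ) {M N : IndecModA R}
    (hM : ARVertex.mk M ∈ Γ) (hN : ARVertex.mk N ∈ Γ) : HP M N :=
  hp_of_conn (hΓ.2.2.2 _ hM _ hN) M N rfl rfl

/-- Nonzero nonisomorphism step. -/
def NN (X Y : IndecModA R) : Prop :=
  ∃ f : X.1.M →ₗ[R] Y.1.M, f ≠ 0 ∧ ¬ Function.Bijective f

/-- Nonzero nonisomorphism step on vertices. -/
def NNv (x y : ARVertex R) : Prop :=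
  ∃ X Y : IndecModA R, NN X Y ∧ ARVertex.mk X = x ∧ ARVertex.mk Y = y

lemma nn_of_nnv {X Y : IndecModA R} (h : NNv (ARVertex.mk X) (ARVertex.mk Y)) : NN X Y := by
  obtain ⟨X', Y', ⟨f, hf0, hfb⟩, hX, hY⟩ := h
  obtain ⟨e⟩ := exact_mk hX.symm
  obtain ⟨e'⟩ := exact_mk hY
  refine ⟨e'.toLinearMap.comp (f.comp e.toLinearMap), ?_, ?_⟩
  · intro h0
    apply hf0
    ext x
    have := LinearMap.congr_fun h0 (e.symm x)
    simp only [LinearMap.comp_apply, LinearEquiv.coe_coe, LinearEquiv.apply_symm_apply,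
      LinearMap.zero_apply] at this ⊢
    exact e'.map_eq_zero_iff.mp this
  · intro hb
    apply hfb
    have h1 : ⇑f = e'.symm ∘ (e'.toLinearMap.comp (f.comp e.toLinearMap)) ∘ e.symm := by
      ext x
      simp
    rw [h1]
    exact e'.symm.bijective.comp (hb.comp e.symm.bijective)

lemma nnv_path_of_hp {X Y : IndecModA R} (h : HP X Y) :
    ReflTransGen NNv (ARVertex.mk X) (ARVertex.mk Y) := by
  induction h with
  | refl => exact ReflTransGen.refl
  | tail h1 h2 ih =>
    rename_i b c
    obtain ⟨f, hf⟩ := h2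
    by_cases hb : Function.Bijective f
    · rw [← mk_eq_of_bij hb]; exact ih
    · exact ReflTransGen.tail ih ⟨b, c, ⟨f, hf, hb⟩, rfl, rfl⟩

lemma nn_seq {x y : ARVertex R} (h : ReflTransGen NNv x y) : ∀ X : IndecModA R,
    ARVertex.mk X = x → ∃ (n : ℕ) (o : ℕ → IndecModA R), o 0 = X ∧ ARVertex.mk (o n) = y ∧
      ∀ i < n, NN (o i) (o (i + 1)) := by
  induction h using ReflTransGen.head_induction_on with
  | refl => intro X hX; exact ⟨0, fun _ => X, rfl, hX, fun i hi => absurd hi (Nat.not_lt_zero i)⟩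
  | head h1 h2 ih =>
    rename_i a c
    rintro X rfl
    obtain ⟨Y, hY⟩ := exists_mk c
    obtain ⟨n, o, h0, hn, hs⟩ := ih Y hY
    refine ⟨n + 1, fun i => Nat.casesOn i X o, rfl, hn, ?_⟩
    intro i hi
    cases i with
    | zero =>
      change NN X (o 0)
      rw [h0]
      subst hY
      exact nn_of_nnv h1
    | succ i => exact hs i (by omega)

lemma not_inRadInf_of_loop {X0 A B : IndecModA R} (hX0 : IsCycleFiniteModule X0.1)
    {f : A.1.M →ₗ[R] B.1.M} (hf0 : f ≠ 0) (hfb : ¬ Function.Bijective f)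
    (h1 : ReflTransGen NNv (ARVertex.mk B) (ARVertex.mk X0))
    (h2 : ReflTransGen NNv (ARVertex.mk X0) (ARVertex.mk A)) : ¬ InRadInf f := by
  intro hinf
  obtain ⟨m, o1, h10, h1m, h1s⟩ := nn_seq h1 B rfl
  obtain ⟨n, o2, h20, h2n, h2s⟩ := nn_seq h2 (o1 m) h1m
  obtain ⟨eA⟩ := exact_mk h2n
  let p : ℕ → IndecModA R := fun i => if i ≤ m then o1 i else o2 (i - m)
  have hp0 : p 0 = B := by simp [p, h10]
  have hpm : p m = o1 m := by simp [p]
  have hpn : p (m + n) = o2 n := by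
    by_cases hn : n = 0
    · subst hn
      rw [h20]
      exact hpm
    · simp [p, hn]
  have hps : ∀ i < m + n, NN (p i) (p (i + 1)) := by
    intro i hi
    by_cases h3 : i + 1 ≤ m
    · have e1 : p i = o1 i := by simp [p, show i ≤ m by omega]
      have e2 : p (i + 1) = o1 (i + 1) := by simp [p, h3]
      rw [e1, e2]
      exact h1s i (by omega)
    · have e1 : p i = o2 (i - m) := by
        by_cases h4 : i ≤ m
        · have : i = m := by omega
          subst this
          rw [hpm, Nat.sub_self, h20]
        · simp [p, h4]
      have e2 : p (i + 1) = o2 (i - m + 1) := by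
        simp only [p, h3, if_false]
        congr 1
        omega
      rw [e1, e2]
      exact h2s _ (by omega)
  have hfirst : ∃ g : (o2 n).1.M →ₗ[R] (p 0).1.M, g ≠ 0 ∧ ¬ Function.Bijective g ∧
      InRadInf (X := (o2 n).1) (Y := (p 0).1) g := by
    rw [hp0]
    refine ⟨f.comp eA.toLinearMap, ?_, ?_, ?_⟩
    · intro h0
      apply hf0
      ext x
      have := LinearMap.congr_fun h0 (eA.symm x)
      simpa using this
    · intro hb
      apply hfb
      have h1 : ⇑f = (f.comp eA.toLinearMap) ∘ eA.symm := by
        ext x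
        simp
      rw [h1]
      exact hb.comp eA.symm.bijective
    · intro k
      exact radPow_comp_right k (hinf k) _
  let o : ℕ → IndecModA R := fun i => Nat.casesOn i (o2 n) p
  have hstep : ∀ i : Fin (m + n + 1), ∃ g : (o i.castSucc.val).1.M →ₗ[R] (o i.succ.val).1.M,
      g ≠ 0 ∧ ¬ Function.Bijective g ∧ (i.val = 0 → InRadInf g) := by
    rintro ⟨i, hi⟩
    cases i with
    | zero =>
      obtain ⟨g, hg1, hg2, hg3⟩ := hfirst
      exact ⟨g, hg1, hg2, fun _ => hg3⟩
    | succ i =>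
      obtain ⟨g, hg1, hg2⟩ := hps i (by omega)
      exact ⟨g, hg1, hg2, fun h => absurd h (Nat.succ_ne_zero i)⟩
  choose hom hh1 hh2 hh3 using hstep
  let c : ModCycle R :=
    { len := m + n + 1
      len_pos := Nat.succ_pos _
      obj := fun i => (o i.val).1
      obj_indec := fun i => (o i.val).2
      closed := by
        change (p (m + n)).1 = (o2 n).1
        rw [hpn]
      hom := hom
      hom_ne_zero := hh1
      hom_not_iso := hh2 }
  have hc : c.Passes X0.1 := by
    refine ⟨⟨m + 1, by change m + 1 < m + n + 1 + 1; omega⟩, ?_⟩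
    change (p m).1.Iso X0.1
    rw [hpm]
    exact exact_mk h1m
  exact hX0.2 c hc ⟨0, Nat.succ_pos _⟩ (hh3 ⟨0, Nat.succ_pos _⟩ rfl)

lemma ar_of_nnv {X0 : IndecModA R} (hX0 : IsCycleFiniteModule X0.1) {a b : ARVertex R}
    (h : NNv a b) (h1 : ReflTransGen NNv b (ARVertex.mk X0))
    (h2 : ReflTransGen NNv (ARVertex.mk X0) a) : ReflTransGen ARArrow a b := by
  obtain ⟨A, B, ⟨f, hf0, hfb⟩, rfl, rfl⟩ := h
  exact ar_path_of_not_inRadInf (not_inRadInf_of_loop hX0 hf0 hfb h1 h2)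

lemma ar_from {X0 : IndecModA R} (hX0 : IsCycleFiniteModule X0.1) {z : ARVertex R}
    (h2 : ReflTransGen NNv (ARVertex.mk X0) z) : ReflTransGen NNv z (ARVertex.mk X0) →
    ReflTransGen ARArrow (ARVertex.mk X0) z := by
  induction h2 with
  | refl => intro _; exact ReflTransGen.refl
  | tail h3 h4 ih =>
    intro h1
    exact (ih (ReflTransGen.head h4 h1)).trans (ar_of_nnv hX0 h4 h1 h3)

lemma ar_to {X0 : IndecModA R} (hX0 : IsCycleFiniteModule X0.1) {z : ARVertex R}
    (h2 : ReflTransGen NNv z (ARVertex.mk X0)) : ReflTransGen NNv (ARVertex.mk X0) z →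
    ReflTransGen ARArrow z (ARVertex.mk X0) := by
  induction h2 using ReflTransGen.head_induction_on with
  | refl => intro _; exact ReflTransGen.refl
  | head h3 h4 ih =>
    intro h1
    exact (ar_of_nnv hX0 h3 h4 h1).trans (ih (ReflTransGen.tail h1 h3))

lemma mem_of_ar_loop {Γ : Set (ARVertex R)} (hΓ : IsCyclicComponent Γ) {x z : ARVertex R}
    (hx : x ∈ Γ) (h1 : ReflTransGen ARArrow x z) : ReflTransGen ARArrow z x → z ∈ Γ := by
  induction h1 with
  | refl => intro _; exact hx
  | tail h3 h4 ih =>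
    rename_i b c
    intro h2
    refine hΓ.2.2.1 b (ih (ReflTransGen.head h4 h2)) c ?_ (Or.inl h4)
    exact (TransGen.tail' (h2.trans h3) h4)

lemma gamma_convex {Γ : Set (ARVertex R)} (hΓ : IsCycleFiniteCyclicComponent Γ)
    {M Z N : IndecModA R} (hM : ARVertex.mk M ∈ Γ) (hN : ARVertex.mk N ∈ Γ)
    (h1 : HP M Z) (h2 : HP Z N) : ARVertex.mk Z ∈ Γ := by
  obtain ⟨hc, x, hx, X0, rfl, hX0⟩ := hΓ
  have p1 := nnv_path_of_hp ((gamma_hp hc hx hM).trans h1)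
  have p2 := nnv_path_of_hp (h2.trans (gamma_hp hc hN hx))
  exact mem_of_ar_loop hc hx (ar_from hX0 p1 p2) (ar_to hX0 p2 p1)

end Gamma

end SA


namespace SA

open MulOpposite

section Alg

variable {A : Type u} [Ring A]

/-- The right module homomorphism `A → M` given by a vector `n`. -/
def ev {M : Type u} [AddCommGroup M] [Module Aᵐᵒᵖ M] (n : M) : A →ₗ[Aᵐᵒᵖ] M where
  toFun x := op x • n
  map_add' x y := by rw [op_add, add_smul]
  map_smul' r x := by
    induction r using MulOpposite.rec' with
    | _ r => simp only [op_smul_eq_mul, op_mul, mul_smul, RingHom.id_apply]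

lemma ev_apply {M : Type u} [AddCommGroup M] [Module Aᵐᵒᵖ M] (n : M) (x : A) :
    ev n x = op x • n := rfl

lemma ev_mul (n x : A) : ev n x = n * x := rfl

lemma map_mul_right {M : Type u} [AddCommGroup M] [Module Aᵐᵒᵖ M] (φ : A →ₗ[Aᵐᵒᵖ] M) (x y : A) :
    φ (x * y) = op y • φ x := by
  rw [← op_smul_eq_mul, φ.map_smul]

lemma mem_span_idem {e : A} (he : IsIdempotentElem e) (x : A) :
    x ∈ Submodule.span Aᵐᵒᵖ {e} ↔ e * x = x := by
  rw [Submodule.mem_span_singleton]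
  constructor
  · rintro ⟨a, rfl⟩
    induction a using MulOpposite.rec' with
    | _ a => rw [op_smul_eq_mul, ← mul_assoc, he.eq]
  · intro h
    exact ⟨op x, by rw [op_smul_eq_mul, h]⟩

lemma comp_factor_iff {R : Type u} [Ring R] {S M : Type u} [AddCommGroup S] [Module R S]
    [AddCommGroup M] [Module R M] :
    IsCompFactorMod R S M ↔ ∃ (N : Submodule R M) (θ : N →ₗ[R] S), Function.Surjective θ := by
  constructor
  · rintro ⟨N', N, h, ⟨e⟩⟩
    exact ⟨N, e.toLinearMap.comp (Submodule.mkQ _), e.surjective.comp (Submodule.mkQ_surjective _)⟩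
  · rintro ⟨N, θ, hθ⟩
    refine ⟨(LinearMap.ker θ).map N.subtype, N, Submodule.map_subtype_le _ _, ?_⟩
    have : ((LinearMap.ker θ).map N.subtype).comap N.subtype = LinearMap.ker θ :=
      Submodule.comap_map_eq_of_injective N.subtype_injective _
    rw [this]
    exact ⟨θ.quotKerEquivOfSurjective hθ⟩

lemma exists_cyc {R : Type u} [Ring R] {M : Type u} [AddCommGroup M] [Module R M] [IsNoetherian R M]
    {m : M} (hm : m ≠ 0) : ∃ (S : Type u) (_ : AddCommGroup S) (_ : Module R S)
      (_ : IsSimpleModule R S) (θ : (Submodule.span R {m}) →ₗ[R] S), Function.Surjective θ ∧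
      θ ⟨m, Submodule.mem_span_singleton_self m⟩ ≠ 0 := by
  have : Nontrivial (Submodule.span R {m}) :=
    ⟨⟨⟨m, Submodule.mem_span_singleton_self m⟩, 0, fun h => hm (congrArg Subtype.val h)⟩⟩
  obtain ⟨H, hH⟩ := IsCoatomic.exists_coatom (Submodule R (Submodule.span R {m}))
  refine ⟨_, _, _, isSimpleModule_iff_isCoatom.mpr hH, H.mkQ, H.mkQ_surjective, ?_⟩
  intro h
  apply hH.1
  rw [eq_top_iff]
  rintro ⟨x, hx⟩ -
  obtain ⟨a, rfl⟩ := Submodule.mem_span_singleton.mp hx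
  have h1 : (⟨m, Submodule.mem_span_singleton_self m⟩ : Submodule.span R {m}) ∈ H := by
    rwa [Submodule.mkQ_apply, Submodule.Quotient.mk_eq_zero] at h
  exact H.smul_mem a h1

lemma exists_prim [IsArtinian Aᵐᵒᵖ A] {S : Type u} [AddCommGroup S] [Module Aᵐᵒᵖ S] (s : S)
    (N : Submodule Aᵐᵒᵖ A) : ∀ e : A, N = Submodule.span Aᵐᵒᵖ {e} → IsIdempotentElem e →
      op e • s ≠ 0 → ∃ e', IsPrimitiveIdempotent A e' ∧ e * e' = e' ∧ e' * e = e' ∧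
        op e' • s ≠ 0 := by
  induction N using WellFoundedLT.induction with
  | ind N ih =>
    rintro e rfl he hs
    by_cases hp : IsPrimitiveIdempotent A e
    · exact ⟨e, hp, he.eq, he.eq, hs⟩
    have he0 : e ≠ 0 := by
      rintro rfl
      simp at hs
    have key : ∀ f g : A, IsIdempotentElem f → IsIdempotentElem g → f * g = 0 → g * f = 0 →
        e = f + g → g ≠ 0 → op f • s ≠ 0 →
        ∃ e', IsPrimitiveIdempotent A e' ∧ e * e' = e' ∧ e' * e = e' ∧ op e' • s ≠ 0 := by
      intro f g hf hg hfg hgf hefg hg0 hfs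
      have hef : e * f = f := by rw [hefg, add_mul, hf.eq, hgf, add_zero]
      have hfe : f * e = f := by rw [hefg, mul_add, hf.eq, hfg, add_zero]
      have hlt : Submodule.span Aᵐᵒᵖ {f} < Submodule.span Aᵐᵒᵖ {e} := by
        refine lt_of_le_of_ne ?_ ?_
        · rw [Submodule.span_singleton_le_iff_mem, mem_span_idem he, hef]
        · intro h
          have h1 : e ∈ Submodule.span Aᵐᵒᵖ {f} := by
            rw [h]; exact Submodule.mem_span_singleton_self e
          rw [mem_span_idem hf, hfe] at h1
          apply hg0
          rw [← h1] at hefg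
          exact (left_eq_add.mp hefg)
      obtain ⟨e', h1, h2, h3, h4⟩ := ih _ hlt f rfl hf hfs
      refine ⟨e', h1, ?_, ?_, h4⟩
      · rw [← h2, ← mul_assoc, hef]
      · rw [← h3, mul_assoc, hfe]
    have : ¬ ∀ f g : A, IsIdempotentElem f → IsIdempotentElem g → f * g = 0 → g * f = 0 →
        e = f + g → f = 0 ∨ g = 0 := fun h => hp ⟨he, he0, h⟩
    push Not at this
    obtain ⟨f, g, hf, hg, hfg, hgf, hefg, hf0, hg0⟩ := this
    by_cases hfs : op f • s = 0
    · refine key g f hg hf hgf hfg (by rw [hefg, add_comm]) hf0 ?_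
      intro hgs
      apply hs
      rw [hefg, op_add, add_smul, hfs, hgs, add_zero]
    · exact key f g hf hg hfg hgf hefg hg0 hfs

lemma prim_indec {e : A} (he : IsPrimitiveIdempotent A e) :
    IsIndecMod Aᵐᵒᵖ (Submodule.span Aᵐᵒᵖ {e}) := by
  obtain ⟨hi, h0, hs⟩ := he
  have hmem := mem_span_idem hi
  let e1 : Submodule.span Aᵐᵒᵖ {e} := ⟨e, Submodule.mem_span_singleton_self e⟩
  refine ⟨⟨⟨e1, 0, fun h => h0 (congrArg Subtype.val h)⟩⟩, ?_⟩
  intro φ hφ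
  have hact : ∀ z : Submodule.span Aᵐᵒᵖ {e}, (φ z : A) = (φ e1 : A) * z := by
    intro z
    have hz : z = op (z : A) • e1 := by
      apply Subtype.ext
      change (z : A) = op (z : A) • e
      rw [op_smul_eq_mul, (hmem _).mp z.2]
    conv_lhs => rw [hz, φ.map_smul]
    change op (z : A) • (φ e1 : A) = _
    rw [op_smul_eq_mul]
  set g : A := (φ e1 : A) with hg
  have heg : e * g = g := (hmem _).mp (φ e1).2
  have hge : g * e = g := (hact e1).symm
  have hgg : g * g = g := by
    rw [← hact (φ e1)]
    exact congrArg Subtype.val (LinearMap.congr_fun hφ e1)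
  rcases hs g (e - g) hgg
    (by unfold IsIdempotentElem; simp [mul_sub, sub_mul, heg, hge, hgg, hi.eq])
    (by rw [mul_sub, hge, hgg, sub_self]) (by rw [sub_mul, heg, hgg, sub_self]) (by abel) with h | h
  · left
    ext z
    rw [hact, h, zero_mul]; rfl
  · right
    ext z
    rw [hact, ← sub_eq_zero.mp h]
    exact (hmem _).mp z.2

lemma not_both [IsNoetherian Aᵐᵒᵖ A] [IsArtinian Aᵐᵒᵖ A] (hb : IsBasicAlgebra A) {e f : A}
    (he : IsIdempotentElem e) (hf : IsIdempotentElem f) (hef : e * f = 0) (hfe : f * e = 0)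
    {S : Type u} [AddCommGroup S] [Module Aᵐᵒᵖ S] [IsSimpleModule Aᵐᵒᵖ S] {s s' : S}
    (hs : op e • s ≠ 0) (hs' : op f • s' ≠ 0) : False := by
  obtain ⟨e', he', h1, h2, h3⟩ := exists_prim s _ e rfl he hs
  obtain ⟨f', hf', h4, h5, h6⟩ := exists_prim s' _ f rfl hf hs'
  apply hb
  refine ⟨e', f', he', hf', ?_, ?_, ?_⟩
  · rw [← h2, ← h4, mul_assoc, ← mul_assoc e f, hef, zero_mul, mul_zero]
  · rw [← h5, ← h1, mul_assoc, ← mul_assoc f e, hfe, zero_mul, mul_zero]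
  have main : ∀ (e f : A), IsPrimitiveIdempotent A e → IsPrimitiveIdempotent A f → ∀ t t' : S,
      op e • t = t → op f • t' = t' → t ≠ 0 → ∃ x : A, e * x = x ∧ op x • t = t' := by
    intro e f he hf t t' ht ht' h0
    obtain ⟨a, ha⟩ := Submodule.mem_span_singleton.mp
      (show t' ∈ Submodule.span Aᵐᵒᵖ {t} by
        rw [IsSimpleModule.span_singleton_eq_top Aᵐᵒᵖ h0]; trivial)
    induction a using MulOpposite.rec' with
    | _ a =>
    refine ⟨e * a * f, by rw [← mul_assoc, ← mul_assoc, he.1.eq], ?_⟩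
    rw [op_mul, op_mul, mul_smul, mul_smul, ht, ha, ht']
  have idt : ∀ (e : A) (s : S), IsIdempotentElem e → op e • (op e • s) = op e • s := by
    intro e s he
    rw [← mul_smul, ← op_mul, he.eq]
  obtain ⟨x, hx, hxt⟩ := main e' f' he' hf' (op e' • s) (op f' • s') (idt _ _ he'.1) (idt _ _ hf'.1) h3
  obtain ⟨y, hy, hyt⟩ := main f' e' hf' he' (op f' • s') (op e' • s) (idt _ _ hf'.1) (idt _ _ he'.1) h6
  let Lx : Submodule.span Aᵐᵒᵖ {f'} →ₗ[Aᵐᵒᵖ] Submodule.span Aᵐᵒᵖ {e'} :=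
    (ev x).restrict (fun z _ => by rw [mem_span_idem he'.1, ev_mul, ← mul_assoc, hx])
  let Ly : Submodule.span Aᵐᵒᵖ {e'} →ₗ[Aᵐᵒᵖ] Submodule.span Aᵐᵒᵖ {f'} :=
    (ev y).restrict (fun z _ => by rw [mem_span_idem hf'.1, ev_mul, ← mul_assoc, hy])
  have nonnil : ∀ (e w : A), IsPrimitiveIdempotent A e → ∀ t : S, op e • t = t → t ≠ 0 →
      op w • t = t → ∀ φ : Module.End Aᵐᵒᵖ (Submodule.span Aᵐᵒᵖ {e}), (∀ z, (φ z : A) = w * z) →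
      Function.Bijective φ := by
    intro e w he t het ht hwt φ hφ
    rcases bij_or_nilp (X := of Aᵐᵒᵖ (Submodule.span Aᵐᵒᵖ {e})) (prim_indec he) φ with h | ⟨k, hk⟩
    · exact h
    exfalso
    have hpow : ∀ k : ℕ, ∀ z, ((φ ^ k) z : A) = w ^ k * z := by
      intro k
      induction k with
      | zero => intro z; simp
      | succ k ih =>
        intro z
        rw [pow_succ', Module.End.mul_apply, hφ, ih, pow_succ', mul_assoc]
    have hz := hpow k ⟨e, Submodule.mem_span_singleton_self e⟩
    rw [hk] at hz
    have hz' : w ^ k * e = 0 := hz.symm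
    have hwk : ∀ k : ℕ, op (w ^ k) • t = t := by
      intro k
      induction k with
      | zero => simp
      | succ k ih => rw [pow_succ', op_mul, mul_smul, hwt, ih]
    apply ht
    rw [← het, ← hwk k, ← mul_smul, ← op_mul, hz', op_zero, zero_smul]
  have b1 := nonnil e' (x * y) he' (op e' • s) (idt _ _ he'.1) h3
    (by rw [op_mul, mul_smul, hxt, hyt]) (Lx.comp Ly) (fun z => (mul_assoc x y z).symm)
  have b2 := nonnil f' (y * x) hf' (op f' • s') (idt _ _ hf'.1) h6
    (by rw [op_mul, mul_smul, hyt, hxt]) (Ly.comp Lx) (fun z => (mul_assoc y x z).symm)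
  refine ⟨LinearEquiv.ofBijective Ly ⟨?_, ?_⟩⟩
  · exact Function.Injective.of_comp (f := Lx) b1.1
  · exact Function.Surjective.of_comp (g := Lx) b2.2

end Alg

end SA


namespace SA

open MulOpposite

section Fin

variable {A : Type u} [Ring A]

lemma split_idem {P Q : Submodule Aᵐᵒᵖ A} (h : IsCompl P Q) : ∃ e f : A, e ∈ P ∧ f ∈ Q ∧
    e + f = 1 ∧ (∀ x ∈ P, e * x = x) ∧ (∀ x ∈ P, f * x = 0) ∧ (∀ x ∈ Q, e * x = 0) ∧
    (∀ x ∈ Q, f * x = x) := by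
  obtain ⟨e, he, f, hf, hef⟩ := Submodule.mem_sup.mp
    (show (1 : A) ∈ P ⊔ Q by rw [h.sup_eq_top]; trivial)
  have hP : ∀ x : A, e * x ∈ P := fun x => by
    rw [← op_smul_eq_mul]; exact P.smul_mem _ he
  have hQ : ∀ x : A, f * x ∈ Q := fun x => by
    rw [← op_smul_eq_mul]; exact Q.smul_mem _ hf
  have hx : ∀ x : A, e * x + f * x = x := fun x => by rw [← add_mul, hef, one_mul]
  have hd := Submodule.disjoint_def.mp h.disjoint
  have h1 : ∀ x ∈ P, f * x = 0 := fun x hxP => by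
    refine hd _ ?_ (hQ x)
    rw [eq_sub_of_add_eq' (hx x)]
    exact P.sub_mem hxP (hP x)
  have h2 : ∀ x ∈ Q, e * x = 0 := fun x hxQ => by
    refine hd _ (hP x) ?_
    rw [eq_sub_of_add_eq (hx x)]
    exact Q.sub_mem hxQ (hQ x)
  refine ⟨e, f, he, hf, hef, fun x hxP => ?_, h1, h2, fun x hxQ => ?_⟩
  · have := hx x
    rwa [h1 x hxP, add_zero] at this
  · have := hx x
    rwa [h2 x hxQ, zero_add] at this

lemma top_iff [IsNoetherian Aᵐᵒᵖ A] [IsArtinian Aᵐᵒᵖ A] {P : Submodule Aᵐᵒᵖ A} {e : A}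
    (heP : e ∈ P) (he : ∀ x ∈ P, e * x = x)
    {S : Type u} [AddCommGroup S] [Module Aᵐᵒᵖ S] [IsSimpleModule Aᵐᵒᵖ S] :
    IsCompFactorMod Aᵐᵒᵖ S (↥P ⧸ modRadical Aᵐᵒᵖ ↥P) ↔ ∃ s : S, op e • s ≠ 0 := by
  constructor
  · intro h
    obtain ⟨N, θ, hθ⟩ := comp_factor_iff.mp h
    have hss : IsSemisimpleModule Aᵐᵒᵖ (↥P ⧸ modRadical Aᵐᵒᵖ ↥P) :=
      (IsArtinian.isSemisimpleModule_iff_jacobson _ _).mpr (Module.jacobson_quotient_jacobson _ _)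
    obtain ⟨g, hg⟩ := IsSemisimpleModule.extension_property N.subtype N.subtype_injective θ
    have hgs : Function.Surjective g := by
      intro s
      obtain ⟨n, hn⟩ := hθ s
      exact ⟨n, by rw [← hn, ← hg]; rfl⟩
    have hge : ∀ p : P, g (Submodule.mkQ _ p) = op (p : A) • g (Submodule.mkQ _ ⟨e, heP⟩) := by
      intro p
      rw [← map_smul, ← map_smul]
      congr 2
      apply Subtype.ext
      change (p : A) = op (p : A) • e
      rw [op_smul_eq_mul, he _ p.2]
    refine ⟨g (Submodule.mkQ _ ⟨e, heP⟩), ?_⟩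
    rw [← hge ⟨e, heP⟩]
    intro h0
    have : Nontrivial S := IsSimpleModule.nontrivial Aᵐᵒᵖ S
    obtain ⟨s, hs⟩ := exists_ne (0 : S)
    obtain ⟨q, rfl⟩ := hgs s
    obtain ⟨p, rfl⟩ := Submodule.mkQ_surjective _ q
    rw [hge, h0, smul_zero] at hs
    exact hs rfl
  · rintro ⟨s, hs⟩
    let φ : P →ₗ[Aᵐᵒᵖ] S := (ev s).comp P.subtype
    have hφ : φ ≠ 0 := fun h => hs (LinearMap.congr_fun h ⟨e, heP⟩)
    have hsur := LinearMap.surjective_of_ne_zero hφ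
    have hker : modRadical Aᵐᵒᵖ ↥P ≤ LinearMap.ker φ :=
      sInf_le (LinearMap.isCoatom_ker_of_surjective hsur)
    rw [comp_factor_iff]
    refine ⟨⊤, (Submodule.liftQ _ φ hker).comp (Submodule.subtype ⊤), ?_⟩
    intro s
    obtain ⟨p, rfl⟩ := hsur s
    exact ⟨⟨Submodule.mkQ _ p, trivial⟩, rfl⟩

lemma uniform_quot {R : Type u} [Ring R] {M : Type u} [AddCommGroup M] [Module R M]
    [IsNoetherian R M] (V0 : Submodule R M) (w : M) (hw : w ∉ V0) :
    ∃ V : Submodule R M, V0 ≤ V ∧ w ∉ V ∧ IsIndecMod R (M ⧸ V) := by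
  obtain ⟨V, ⟨hV, hwV⟩, hmax⟩ := set_has_maximal_iff_noetherian.mpr ‹IsNoetherian R M›
    {V | V0 ≤ V ∧ w ∉ V} ⟨V0, le_rfl, hw⟩
  refine ⟨V, hV, hwV, ?_⟩
  have hw0 : V.mkQ w ≠ 0 := by
    rwa [Submodule.mkQ_apply, ne_eq, Submodule.Quotient.mk_eq_zero]
  have key : ∀ U : Submodule R (M ⧸ V), U ≠ ⊥ → V.mkQ w ∈ U := by
    intro U hU
    by_contra hwU
    refine hmax (U.comap V.mkQ) ⟨hV.trans (Submodule.le_comap_mkQ V U), hwU⟩ ?_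
    refine lt_of_le_of_ne (Submodule.le_comap_mkQ V U) ?_
    intro h
    apply hU
    rw [eq_bot_iff]
    intro z hz
    obtain ⟨m, rfl⟩ := V.mkQ_surjective z
    have : m ∈ V := by rw [h]; exact hz
    rw [Submodule.mem_bot, Submodule.mkQ_apply, Submodule.Quotient.mk_eq_zero]
    exact this
  refine ⟨⟨⟨_, _, hw0⟩⟩, ?_⟩
  intro φ hφ
  by_contra hcon
  push Not at hcon
  have hφφ : ∀ z, φ (φ z) = φ z := fun z => LinearMap.congr_fun hφ z
  have h1 := key (LinearMap.ker φ) (by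
    intro h
    apply hcon.2
    refine LinearMap.ext fun z => ?_
    have : z - φ z ∈ LinearMap.ker φ := by
      rw [LinearMap.mem_ker, map_sub, hφφ, sub_self]
    rw [h, Submodule.mem_bot] at this
    exact (sub_eq_zero.mp this).symm)
  have h2 := key (LinearMap.range φ) (by
    intro h
    exact hcon.1 (LinearMap.range_eq_bot.mp h))
  obtain ⟨z, hz⟩ := h2
  rw [← hz, LinearMap.mem_ker, hφφ, hz] at h1
  exact hw0 h1

lemma gamma_f_zero [IsNoetherian Aᵐᵒᵖ A] [IsArtinian Aᵐᵒᵖ A] (hb : IsBasicAlgebra A) {e f : A}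
    (he : IsIdempotentElem e) (hf : IsIdempotentElem f) (hef : e * f = 0) (hfe : f * e = 0)
    {Γ : Set (ARVertex Aᵐᵒᵖ)}
    (hC : ∀ (S : Type u) [AddCommGroup S] [Module Aᵐᵒᵖ S], IsSimpleModule Aᵐᵒᵖ S →
      ((∃ s : S, op e • s ≠ 0) ↔
      ∃ x ∈ Γ, ∃ X : IndecModA Aᵐᵒᵖ, ARVertex.mk X = x ∧ IsCompFactorMod Aᵐᵒᵖ S X.1.M))
    {N : IndecModA Aᵐᵒᵖ} (hN : ARVertex.mk N ∈ Γ) (n : N.1.M) : op f • n = 0 := by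
  by_contra hn
  obtain ⟨S, _, _, hS, θ, hθ, hθ0⟩ := exists_cyc (R := Aᵐᵒᵖ) hn
  obtain ⟨s, hs⟩ := (hC S hS).mpr ⟨_, hN, N, rfl, comp_factor_iff.mpr ⟨_, θ, hθ⟩⟩
  refine not_both hb he hf hef hfe hs (s' := θ ⟨op f • n, Submodule.mem_span_singleton_self _⟩) ?_
  rw [← map_smul]
  convert hθ0 using 3
  change op f • op f • n = _
  rw [← mul_smul, ← op_mul, hf.eq]

end Fin

end SA


namespace SA

open MulOpposite

section Main

variable {A : Type u} [Ring A]

lemma efe_zero [IsNoetherian Aᵐᵒᵖ A] [IsArtinian Aᵐᵒᵖ A] {e f : A}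
    (he : IsIdempotentElem e) (hf : IsIdempotentElem f)
    {Γ : Set (ARVertex Aᵐᵒᵖ)} (hΓ : IsCycleFiniteCyclicComponent Γ)
    (hC : ∀ (S : Type u) [AddCommGroup S] [Module Aᵐᵒᵖ S], IsSimpleModule Aᵐᵒᵖ S →
      ((∃ s : S, op e • s ≠ 0) ↔
      ∃ x ∈ Γ, ∃ X : IndecModA Aᵐᵒᵖ, ARVertex.mk X = x ∧ IsCompFactorMod Aᵐᵒᵖ S X.1.M))
    (hF : ∀ N : IndecModA Aᵐᵒᵖ, ARVertex.mk N ∈ Γ → ∀ n : N.1.M, op f • n = 0)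
    (a b : A) : (e * a * f) * (f * b * e) = 0 := by
  set x : A := e * a * f with hx
  set y : A := f * b * e with hy
  have hex : e * x = x := by rw [hx, ← mul_assoc, ← mul_assoc, he.eq]
  have hxf : x * f = x := by rw [hx, mul_assoc, hf.eq]
  have hye : y * e = y := by rw [hy, mul_assoc, he.eq]
  by_contra hd
  -- the simple module on top of the submodule generated by `x * y`
  obtain ⟨S, _, _, hS, θd, -, hs⟩ := exists_cyc (R := Aᵐᵒᵖ) hd
  set dd : Submodule.span Aᵐᵒᵖ {x * y} := ⟨x * y, Submodule.mem_span_singleton_self _⟩ with hdd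
  have hse : op e • θd dd = θd dd := by
    rw [← map_smul]
    congr 1
    apply Subtype.ext
    change op e • (x * y) = x * y
    rw [op_smul_eq_mul, mul_assoc, hye]
  obtain ⟨_, hN, N, rfl, hcf⟩ := (hC S hS).mp ⟨θd dd, by rwa [hse]⟩
  obtain ⟨N2, θ, hθ⟩ := comp_factor_iff.mp hcf
  obtain ⟨n0, hn0⟩ := hθ (θd dd)
  let X : Submodule Aᵐᵒᵖ A := Submodule.span Aᵐᵒᵖ {x}
  let xX : X := ⟨x, Submodule.mem_span_singleton_self x⟩
  let dX : X := op y • xX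
  let n : N.1.M := n0
  have hV0 : (n, (0 : X)) ∉ Submodule.span Aᵐᵒᵖ {(n, -dX)} := by
    intro h
    obtain ⟨r, hr⟩ := Submodule.mem_span_singleton.mp h
    have h1 : r • n0 = n0 := Subtype.ext (congrArg Prod.fst hr)
    have h2 : r • dX = 0 := by
      have := congrArg Prod.snd hr
      change r • (-dX) = 0 at this
      rwa [smul_neg, neg_eq_zero] at this
    have h3 : r • dd = 0 := by
      have h2' : ((r • dX : X) : A) = 0 := by rw [h2]; rfl
      exact Subtype.ext h2'
    apply hs
    rw [← hn0, ← h1, map_smul, hn0, ← map_smul, h3, map_zero]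
  obtain ⟨V, hV, hnV, hW⟩ := uniform_quot _ _ hV0
  let W : ModA Aᵐᵒᵖ := of Aᵐᵒᵖ ((N.1.M × X) ⧸ V)
  let iN : N.1.M →ₗ[Aᵐᵒᵖ] W.M := V.mkQ.comp (LinearMap.inl Aᵐᵒᵖ N.1.M X)
  let iX : X →ₗ[Aᵐᵒᵖ] W.M := V.mkQ.comp (LinearMap.inr Aᵐᵒᵖ N.1.M X)
  have hiN : iN n ≠ 0 := by
    intro h
    exact hnV ((Submodule.Quotient.mk_eq_zero V).mp h)
  have hxfX : op f • xX = xX := Subtype.ext (by change op f • x = x; rw [op_smul_eq_mul, hxf])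
  let C : ModA Aᵐᵒᵖ := of Aᵐᵒᵖ (W.M ⧸ LinearMap.range iN)
  let q : W.M →ₗ[Aᵐᵒᵖ] C.M := (LinearMap.range iN).mkQ
  have hc0 : q (iX xX) ≠ 0 := by
    intro h
    obtain ⟨n', hn'⟩ := (Submodule.Quotient.mk_eq_zero _).mp h
    have h1 : iX xX = 0 := by
      rw [← hxfX, map_smul, ← hn', ← map_smul, hF N hN, map_zero]
    have h2 : iX dX = 0 := by rw [map_smul, h1, smul_zero]
    have h3 : ((0 : N.1.M), dX) ∈ V := (Submodule.Quotient.mk_eq_zero V).mp h2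
    have h4 : (n, -dX) ∈ V := hV (Submodule.mem_span_singleton_self _)
    apply hnV
    have := V.add_mem h4 h3
    simpa using this
  obtain ⟨J, _, Vj, i, p, hVj, hpi, hsum⟩ := dec_exists C
  obtain ⟨j, hj⟩ : ∃ j, p j (q (iX xX)) ≠ 0 := by
    by_contra hall
    push Not at hall
    apply hc0
    rw [← hsum (q (iX xX))]
    exact Finset.sum_eq_zero fun j _ => by rw [hall j, map_zero]
  let Z : IndecModA Aᵐᵒᵖ := ⟨Vj j, hVj j⟩
  let μ : X →ₗ[Aᵐᵒᵖ] (Vj j).M := (p j).comp (q.comp iX)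
  have hμ : Function.Surjective μ := by
    intro z
    obtain ⟨⟨n', x'⟩, hw⟩ := V.mkQ_surjective
      (Classical.choose ((LinearMap.range iN).mkQ_surjective (i j z)))
    have hw2 : q (V.mkQ (n', x')) = i j z := by
      rw [hw]; exact Classical.choose_spec ((LinearMap.range iN).mkQ_surjective (i j z))
    refine ⟨x', ?_⟩
    have h1 : (V.mkQ (n', x') : W.M) = iN n' + iX x' := by
      change V.mkQ (n', x') = V.mkQ (n', 0) + V.mkQ (0, x')
      rw [← map_add]; simp
    have h2 : q (iN n') = 0 := (Submodule.Quotient.mk_eq_zero _).mpr ⟨n', rfl⟩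
    have h3 : q (iX x') = i j z := by
      rw [← hw2, h1, map_add, h2, zero_add]
    change p j (q (iX x')) = z
    rw [h3]
    exact LinearMap.congr_fun (hpi j) z
  have hz0f : op f • μ xX = μ xX := by rw [← map_smul, hxfX]
  have hpath1 : HP N Z := by
    refine Relation.ReflTransGen.head (b := (⟨W, hW⟩ : IndecModA Aᵐᵒᵖ)) ?_
      (Relation.ReflTransGen.single ?_)
    · exact ⟨iN, fun h => hiN (by rw [h]; rfl)⟩
    · exact ⟨(p j).comp q, fun h => hj (LinearMap.congr_fun h (iX xX))⟩
  -- the second half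
  let P : Submodule Aᵐᵒᵖ A := Submodule.span Aᵐᵒᵖ {e}
  let e1 : P := ⟨e, Submodule.mem_span_singleton_self e⟩
  have hPe : ∀ t : P, t = op (t : A) • e1 := fun t => Subtype.ext (by
    change (t : A) = op (t : A) • e
    rw [op_smul_eq_mul, (mem_span_idem he _).mp t.2])
  have hXP : X ≤ P := by
    rw [Submodule.span_singleton_le_iff_mem, mem_span_idem he, hex]
  let ι : X →ₗ[Aᵐᵒᵖ] P := Submodule.inclusion hXP
  let H : Submodule Aᵐᵒᵖ P := (LinearMap.ker μ).map ι
  let G : ModA Aᵐᵒᵖ := of Aᵐᵒᵖ (P ⧸ H)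
  let π : P →ₗ[Aᵐᵒᵖ] G.M := H.mkQ
  obtain ⟨jj, hjj⟩ := desc_surj (X := of Aᵐᵒᵖ X) (Y := Vj j) (Z := G) μ hμ (π.comp ι) (by
    intro t ht
    exact (Submodule.Quotient.mk_eq_zero H).mpr ⟨t, ht, rfl⟩)
  have hjz : jj (μ xX) = op x • π e1 := by
    have h1 : jj (μ xX) = π (ι xX) := LinearMap.congr_fun hjj xX
    rw [h1, ← map_smul]
    congr 1
    exact hPe (ι xX)
  have hjz0 : jj (μ xX) ≠ 0 := by
    intro h
    have h1 : jj (μ xX) = π (ι xX) := LinearMap.congr_fun hjj xX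
    rw [h1] at h
    obtain ⟨t, ht, hte⟩ := (Submodule.Quotient.mk_eq_zero H).mp h
    have : t = xX := Submodule.inclusion_injective hXP hte
    rw [this] at ht
    exact hj ht
  obtain ⟨J', _, Vk, i', p', hVk, hpi', hsum'⟩ := dec_exists G
  obtain ⟨k, hk⟩ : ∃ k, p' k (jj (μ xX)) ≠ 0 := by
    by_contra hall
    push Not at hall
    apply hjz0
    rw [← hsum' (jj (μ xX))]
    exact Finset.sum_eq_zero fun j _ => by rw [hall j, map_zero]
  set v : (Vk k).M := p' k (π e1) with hv
  have hv0 : v ≠ 0 := by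
    intro h
    apply hk
    rw [hjz, map_smul, ← hv, h, smul_zero]
  have hve : op e • v = v := by
    rw [hv, ← map_smul, ← map_smul]
    congr 2
    exact (hPe e1).symm
  obtain ⟨S', _, _, hS', θv, -, hs'⟩ := exists_cyc (R := Aᵐᵒᵖ) hv0
  set vv : Submodule.span Aᵐᵒᵖ {v} := ⟨v, Submodule.mem_span_singleton_self _⟩ with hvv
  have hse' : op e • θv vv = θv vv := by
    rw [← map_smul]
    congr 1
    exact Subtype.ext hve
  obtain ⟨_, hM, M, rfl, hcf'⟩ := (hC S' hS').mp ⟨θv vv, by rwa [hse']⟩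
  obtain ⟨M2, θM, hθM⟩ := comp_factor_iff.mp hcf'
  obtain ⟨m0, hm0⟩ := hθM (θv vv)
  let m : M2 := op e • m0
  have hm : θM m = θv vv := by rw [map_smul, hm0, hse']
  have hme : op e • m = m := by
    change op e • op e • m0 = op e • m0
    rw [← mul_smul, ← op_mul, he.eq]
  let ψ0 : P →ₗ[Aᵐᵒᵖ] M.1.M := (ev (m : M.1.M)).comp P.subtype
  have hxm : op x • (m : M.1.M) = 0 := by
    rw [← hxf, op_mul, mul_smul]
    exact hF M hM _
  have hψ0 : H ≤ LinearMap.ker ψ0 := by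
    rintro _ ⟨⟨t, ht⟩, -, rfl⟩
    obtain ⟨c, rfl⟩ := Submodule.mem_span_singleton.mp ht
    induction c using MulOpposite.rec' with
    | _ c =>
    change op (op c • x) • (m : M.1.M) = 0
    rw [op_smul_eq_mul, op_mul, mul_smul, hxm, smul_zero]
  let ψ : G.M →ₗ[Aᵐᵒᵖ] M.1.M := H.liftQ ψ0 hψ0
  have hψ : ψ (i' k v) ≠ 0 := by
    obtain ⟨t, ht⟩ := H.mkQ_surjective (i' k v)
    have ht' : π t = i' k v := ht
    have h1 : ψ (i' k v) = ((op (t : A) • m : M2) : M.1.M) := by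
      rw [← ht']; rfl
    intro h0
    rw [h1] at h0
    have h2 : op (t : A) • m = 0 := Subtype.ext h0
    have h3 : op (t : A) • v = v := by
      rw [hv, ← map_smul, ← map_smul, ← hPe t, ht']
      exact LinearMap.congr_fun (hpi' k) v
    have h4 : op (t : A) • vv = vv := Subtype.ext h3
    apply hs'
    rw [← h4, map_smul, ← hm, ← map_smul, h2, map_zero]
  have hpath2 : HP Z M := by
    refine Relation.ReflTransGen.head (b := (⟨Vk k, hVk k⟩ : IndecModA Aᵐᵒᵖ)) ?_
      (Relation.ReflTransGen.single ?_)
    · exact ⟨(p' k).comp jj, fun h => hk (LinearMap.congr_fun h (μ xX))⟩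
    · exact ⟨ψ.comp (i' k), fun h => hψ (LinearMap.congr_fun h v)⟩
  have hZ := gamma_convex hΓ hN hM hpath1 hpath2
  have := hF Z hZ (μ xX)
  rw [hz0f] at this
  exact hj this

lemma final_iso {P Q : Submodule Aᵐᵒᵖ A} {e f : A} (heP : e ∈ P) (hfQ : f ∈ Q)
    (hsum : e + f = 1) (heP' : ∀ x ∈ P, e * x = x) (hfQ' : ∀ x ∈ Q, f * x = x)
    (hz : ∀ a b : A, (e * a * f) * (f * b * e) = 0) :
    Nonempty ((traceIdeal A Q).ringCon.Quotient ≃+* Module.End Aᵐᵒᵖ ↥P) := by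
  have hff : f * f = f := hfQ' f hfQ
  have hee : e * e = e := heP' e heP
  have hz' : ∀ a b p : A, p ∈ P → e * (a * (f * (b * p))) = 0 := by
    intro a b p hp
    have h1 : e * (a * (f * (b * p))) = ((e * a * f) * (f * b * e)) * p := by
      simp only [mul_assoc]
      rw [heP' p hp, ← mul_assoc f f, hff]
    rw [h1, hz, zero_mul]
  have hmem : ∀ a : A, e * a ∈ P := fun a => by
    rw [← op_smul_eq_mul]; exact P.smul_mem _ heP
  let Φ : A →+* Module.End Aᵐᵒᵖ ↥P :=
    { toFun := fun a => ((ev (e * a)).comp P.subtype).codRestrict P (fun p => by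
        change e * a * p ∈ P
        rw [mul_assoc]; exact hmem _)
      map_one' := by
        ext p
        change e * 1 * (p : A) = p
        rw [mul_one, heP' _ p.2]
      map_zero' := by
        ext p
        change e * 0 * (p : A) = 0
        rw [mul_zero, zero_mul]
      map_add' := fun a b => by
        ext p
        change e * (a + b) * (p : A) = e * a * p + e * b * p
        rw [mul_add, add_mul]
      map_mul' := fun a b => by
        ext p
        change e * (a * b) * (p : A) = e * a * (e * b * p)
        have h1 : b * (p : A) = e * (b * p) + f * (b * p) := by
          rw [← add_mul, hsum, one_mul]
        have h2 := hz' a b p p.2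
        calc e * (a * b) * (p : A) = e * (a * (b * p)) := by simp only [mul_assoc]
          _ = e * (a * (e * (b * p))) + e * (a * (f * (b * p))) := by
            rw [← mul_add, ← mul_add, ← h1]
          _ = e * a * (e * b * p) := by rw [h2, add_zero]; simp only [mul_assoc] }
  have hΦ : ∀ a (p : P), (Φ a p : A) = e * a * p := fun a p => rfl
  have hsur : Function.Surjective Φ := by
    intro ψ
    refine ⟨(ψ ⟨e, heP⟩ : A), ?_⟩
    ext p
    rw [hΦ, heP' _ (ψ ⟨e, heP⟩).2]
    have hp : p = op (p : A) • (⟨e, heP⟩ : P) := Subtype.ext (by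
      change (p : A) = op (p : A) • e
      rw [op_smul_eq_mul, heP' _ p.2])
    conv_rhs => rw [hp, map_smul]
    change _ = op (p : A) • (ψ ⟨e, heP⟩ : A)
    rw [op_smul_eq_mul]
  have hker : traceIdeal A Q = TwoSidedIdeal.ker Φ := by
    apply le_antisymm
    · refine TwoSidedIdeal.span_le.mpr ?_
      intro z hz1
      obtain ⟨g, q, rfl⟩ := Set.mem_iUnion.mp hz1
      change g q ∈ TwoSidedIdeal.ker Φ
      rw [TwoSidedIdeal.mem_ker]
      have hg : ∀ q : Q, g q = g ⟨f, hfQ⟩ * q := by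
        intro q
        have hq : q = op (q : A) • (⟨f, hfQ⟩ : Q) := Subtype.ext (by
          change (q : A) = op (q : A) • f
          rw [op_smul_eq_mul, hfQ' _ q.2])
        conv_lhs => rw [hq, map_smul]
        rw [op_smul_eq_mul]
      ext p
      rw [hΦ, hg q]
      have := hz' (g ⟨f, hfQ⟩) q p p.2
      change e * (g ⟨f, hfQ⟩ * (q : A)) * (p : A) = 0
      rw [← this]
      conv_lhs => rw [← hfQ' _ q.2]
      simp only [mul_assoc]
    · intro a ha
      have ha' : Φ a = 0 := (TwoSidedIdeal.mem_ker _).mp ha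
      have h0 : e * a * e = 0 := by
        rw [← hΦ a ⟨e, heP⟩, ha']; rfl
      have hft : f ∈ traceIdeal A Q :=
        TwoSidedIdeal.subset_span (Set.mem_iUnion.mpr ⟨Q.subtype, ⟨f, hfQ⟩, rfl⟩)
      have hdec : a = e * a * f + f * a := by
        have h1 : e * a * e + e * a * f = e * a := by rw [← mul_add, hsum, mul_one]
        rw [h0, zero_add] at h1
        rw [h1, ← add_mul, hsum, one_mul]
      rw [hdec]
      exact (traceIdeal A Q).add_mem ((traceIdeal A Q).mul_mem_left _ _ hft)
        ((traceIdeal A Q).mul_mem_right _ _ hft)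
  have hker2 : (traceIdeal A Q).ringCon = RingCon.ker Φ := by
    rw [hker]
    rfl
  exact ⟨RingEquiv.ofBijective ((traceIdeal A Q).ringCon.lift Φ hker2.le)
    (RingCon.lift_bijective_iff.mpr ⟨hker2, hsur⟩)⟩

end Main

end SA

/-- **Proposition (support algebra as endomorphism algebra).** Let `A` be a basic
indecomposable artin algebra, `Γ` a cycle-finite component of `_cΓ_A`, and
`A = P_Γ ⊕ Q_Γ` a decomposition such that the simple summands of `P_Γ / rad P_Γ` are
exactly the simple composition factors of the modules in `Γ`. Then the algebras
`supp(Γ) = A / t_A(Γ)` and `End_A(P_Γ)` are isomorphic. -/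
theorem support_algebra_iso_end
    (K A : Type u) [CommRing K] [IsArtinianRing K] [Ring A] [Algebra K A]
    [Module.Finite K A] (hbasic : IsBasicAlgebra A) (hconn : IsConnectedAlgebra A)
    (Γ : Set (ARVertex Aᵐᵒᵖ)) (hΓ : IsCycleFiniteCyclicComponent Γ)
    (D : GammaDecomp A Γ) :
    Nonempty ((traceIdeal A D.Q).ringCon.Quotient ≃+* Module.End Aᵐᵒᵖ ↥D.P) := by
  have hn : IsNoetherian K A := inferInstance
  have ha : IsArtinian K A := inferInstance
  have hn' : IsNoetherian Aᵐᵒᵖ A := isNoetherian_of_tower K hn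
  have ha' : IsArtinian Aᵐᵒᵖ A := isArtinian_of_tower K ha
  obtain ⟨e, f, heP, hfQ, hsum, h1, h2, h3, h4⟩ := SA.split_idem D.compl
  have hC : ∀ (S : Type u) [AddCommGroup S] [Module Aᵐᵒᵖ S], IsSimpleModule Aᵐᵒᵖ S →
      ((∃ s : S, MulOpposite.op e • s ≠ 0) ↔
      ∃ x ∈ Γ, ∃ X : IndecModA Aᵐᵒᵖ, ARVertex.mk X = x ∧ IsCompFactorMod Aᵐᵒᵖ S X.1.M) := by
    intro S _ _ hS
    rw [← D.top_factors S hS]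
    exact (SA.top_iff heP h1).symm
  refine SA.final_iso heP hfQ hsum h1 h4 ?_
  exact SA.efe_zero (h1 e heP) (h4 f hfQ) hΓ hC
    (fun N hN n => SA.gamma_f_zero hbasic (h1 e heP) (h4 f hfQ) (h3 f hfQ) (h2 e heP) hC hN n)
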